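/- arXiv:1607.07498 — 2 statements merged into one kernel-verified Lean document; each statement's English description precedes it below -/
import Mathlib

section
/- For every z ∈ (0,1), the Liverani–Saussol–Vaienti map f_z admits a unique Borel probability measure on [0,1] that is f_z-invariant and absolutely continuous with respect to Lebesgue measure; moreover this measure is ergodic for f_z. -/
open MeasureTheory Set

/-- The Liverani–Saussol–Vaienti (Pomeau–Manneville type) map with parameter `z`:
`f_z(y) = y(1 + 2^z y^z)` for `y ∈ [0, 1/2)` and `f_z(y) = 2y − 1` for `y ∈ [1/2, 1]`. -/
noncomputable def lsv (z : ℝ) (y : ℝ) : ℝ :=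
  if y < 1 / 2 then y * (1 + 2 ^ z * y ^ z) else 2 * y - 1

/-!
The transfer operator of a map with a convex left branch `f` and right branch `y ↦ 2 * y - 1`
preserves nonincreasing densities. One iteration bounds the mass of `(0, x)` by the previous mass of
`(0, g x)`, where `g` is the inverse of `f`, plus `x` times the previous density at `1 / 2`. So when
`∑ gᵏ 1` converges, eventually at least half of the mass stays away from the possibly neutral fixed
point `0`, and boundedly many further iterations turn this into a lower bound for the density that
is uniform on `(0, 1)` and proportional to the mass. This is a Doeblin condition: a multiple of
Lebesgue measure can be split off repeatedly, so an invariant set `s` satisfies `ν s = |s| * ν univ`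
for each `ν` with a nonincreasing density, and `|s|` is `0` or `1`. By the same lower bound the
pointwise liminf of the iterates of the density `1` is nonzero; the transfer operator does not
increase it and preserves mass, so it fixes it. Uniqueness follows from ergodicity.

For the LSV branch, concavity of `x ↦ x ^ (1 - z)` bounds `x` by a multiple of
`x ^ (1 - z) - g x ^ (1 - z)`, so `∑ gᵏ 1` telescopes.
-/

open Filter Topology
open scoped ENNReal NNReal

theorem liminf_add_liminf_le {ι : Type*} {l : Filter ι} (u v : ι → ℝ≥0∞) :
    liminf u l + liminf v l ≤ liminf (fun i ↦ u i + v i) l := by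
  simp only [liminf_eq_iSup_iInf]
  exact ENNReal.biSup_add_biSup_le' ⟨univ, univ_mem⟩ ⟨univ, univ_mem⟩ fun s hs t ht ↦
    le_iSup₂_of_le (s ∩ t) (inter_mem hs ht) <| le_iInf₂ fun i hi ↦
      add_le_add (iInf₂_le i hi.1) (iInf₂_le i hi.2)

theorem map_withDensity_restrict_eq {φ φ' ψ : ℝ → ℝ} {J : Set ℝ} (hφ : Measurable φ)
    (hJ : MeasurableSet J) (hderiv : ∀ x ∈ J, HasDerivWithinAt φ (φ' x) J x)
    (hne : ∀ x ∈ J, φ' x ≠ 0) (hψ : LeftInvOn ψ φ J) (h : ℝ → ℝ≥0∞) :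
    ((volume.restrict J).withDensity h).map φ =
      (volume.restrict (φ '' J)).withDensity fun x ↦ h (ψ x) / ‖φ' (ψ x)‖ₑ := by
  ext t ht
  have hpre : MeasurableSet (φ ⁻¹' t) := hφ ht
  have hderiv' : ∀ x ∈ φ ⁻¹' t ∩ J, HasDerivWithinAt φ (φ' x) (φ ⁻¹' t ∩ J) x :=
    fun x hx ↦ (hderiv x hx.2).mono inter_subset_right
  rw [Measure.map_apply hφ ht, withDensity_apply _ hpre, withDensity_apply _ ht,
    Measure.restrict_restrict hpre, Measure.restrict_restrict ht, ← image_preimage_inter,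
    lintegral_image_eq_lintegral_abs_deriv_mul (hpre.inter hJ) hderiv'
      (hψ.injOn.mono inter_subset_right)]
  refine setLIntegral_congr_fun (hpre.inter hJ) fun x hx ↦ ?_
  simp only [hψ hx.2]
  rw [← Real.enorm_eq_ofReal_abs]
  exact (ENNReal.mul_div_cancel (enorm_ne_zero.2 (hne x hx.2)) enorm_ne_top).symm

/-! ### Ergodicity from a Doeblin condition -/

section Ergodic

variable {X : Type*} [MeasurableSpace X] {T : X → X} {m μ ν : Measure X}

theorem preErgodic_of_absolutelyContinuous (hT : PreErgodic T m) (hμ : μ ≪ m) :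
    PreErgodic T μ :=
  ⟨fun _ hs hTs ↦ (hT.aeconst_set hs hTs).anti hμ.ae_le⟩

theorem eq_of_preErgodic_of_absolutelyContinuous [IsProbabilityMeasure μ]
    [IsProbabilityMeasure ν] (hT : PreErgodic T m) (hμ : MeasurePreserving T μ μ)
    (hν : MeasurePreserving T ν ν) (hμm : μ ≪ m) (hνm : ν ≪ m) : ν = μ := by
  have hsum : Ergodic T (μ + ν) :=
    ⟨hμ.add_measure hν, preErgodic_of_absolutelyContinuous hT (hμm.add_left hνm)⟩
  have two_smul_eq : ∀ {κ : Measure X}, IsProbabilityMeasure κ → MeasurePreserving T κ κ →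
      κ ≪ μ + ν → (2 : ℝ≥0∞) • κ = μ + ν := fun {κ} _ hκT hκ ↦ by
    have : IsFiniteMeasure ((2 : ℝ≥0∞) • κ) := κ.smul_finite ENNReal.ofNat_ne_top
    exact hsum.eq_of_absolutelyContinuous_measure_univ_eq (hκT.smul_measure 2)
      (hκ.smul_left 2) (by simp [one_add_one_eq_two])
  have hac : μ ≪ μ + ν ∧ ν ≪ μ + ν :=
    ⟨Measure.AbsolutelyContinuous.rfl.add_right ν, by
      rw [add_comm]; exact Measure.AbsolutelyContinuous.rfl.add_right μ⟩
  have heq : (2 : ℝ≥0∞) • ν = (2 : ℝ≥0∞) • μ :=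
    (two_smul_eq ‹_› hν hac.2).trans (two_smul_eq ‹_› hμ hac.1).symm
  ext s _
  have := congrArg (fun κ : Measure X ↦ κ s) heq
  simpa [ENNReal.mul_right_inj] using this

/-- A family `𝓓` of finite measures such that a multiple of `m` carrying the proportion `γ` of
the mass can be split off from a suitable push-forward of every `ν ∈ 𝓓`, with a remainder again
in `𝓓`: Doeblin's minorization condition along the orbits of `T`. -/
structure IsDoeblinClass (T : X → X) (m : Measure X) (γ : ℝ≥0) (𝓓 : Set (Measure X)) : Prop where
  isFiniteMeasure : ∀ ν ∈ 𝓓, IsFiniteMeasure ν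
  exists_map_iterate_eq : ∀ ν ∈ 𝓓, ∃ n, ∃ ρ ∈ 𝓓, ν.map T^[n] = (γ * ν univ) • m + ρ

namespace IsDoeblinClass

variable {γ : ℝ≥0} {𝓓 : Set (Measure X)}

theorem abs_real_sub_le [IsProbabilityMeasure m] (h : IsDoeblinClass T m γ 𝓓)
    (hT : Measurable T) {s : Set X} (hs : MeasurableSet s) (hTs : T ⁻¹' s = s) (k : ℕ) :
    ∀ ν ∈ 𝓓, |ν.real s - m.real s * ν.real univ| ≤ (1 - γ) ^ k * ν.real univ := by
  induction k with
  | zero =>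
    intro ν hν
    have := h.isFiniteMeasure ν hν
    have hνs : ν.real s ≤ ν.real univ := measureReal_mono (subset_univ s)
    have hms : m.real s ≤ 1 := measureReal_le_one
    have hpos : 0 ≤ m.real s := measureReal_nonneg
    rw [pow_zero, one_mul, abs_le]
    constructor <;> nlinarith [measureReal_nonneg (μ := ν) (s := s)]
  | succ k ih =>
    intro ν hν
    have := h.isFiniteMeasure ν hν
    obtain ⟨n, ρ, hρ, heq⟩ := h.exists_map_iterate_eq ν hν
    have := h.isFiniteMeasure ρ hρ
    have hsplit : ∀ t, MeasurableSet t → T^[n] ⁻¹' t = t →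
        ν.real t = γ * ν.real univ * m.real t + ρ.real t := fun t ht hTt ↦ by
      have hmap : ν t = γ * ν univ * m t + ρ t := by
        rw [← smul_eq_mul (_ * _), ← Measure.smul_apply, ← Measure.add_apply, ← heq,
          Measure.map_apply (hT.iterate n) ht, hTt]
      rw [measureReal_def, hmap, ENNReal.toReal_add (by finiteness) (by finiteness)]
      simp [measureReal_def]
    have hu : ρ.real univ = (1 - γ) * ν.real univ := by
      have := hsplit univ .univ rfl
      rw [probReal_univ (μ := m)] at this
      linarith
    have hs' := hsplit s hs (preimage_iterate_eq ▸ Function.iterate_fixed hTs n)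
    calc |ν.real s - m.real s * ν.real univ| = |ρ.real s - m.real s * ρ.real univ| := by
          rw [hs', hu]; ring_nf
      _ ≤ (1 - γ) ^ k * ρ.real univ := ih ρ hρ
      _ = (1 - γ) ^ (k + 1) * ν.real univ := by rw [hu]; ring

theorem real_eq_of_preimage_eq [IsProbabilityMeasure m] (h : IsDoeblinClass T m γ 𝓓)
    (hγ : 0 < γ) (hT : Measurable T) {s : Set X} (hs : MeasurableSet s) (hTs : T ⁻¹' s = s)
    (hν : ν ∈ 𝓓) : ν.real s = m.real s * ν.real univ := by
  have := h.isFiniteMeasure ν hν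
  have hle := fun k ↦ h.abs_real_sub_le hT hs hTs k ν hν
  rcases measureReal_nonneg (μ := ν) (s := univ) |>.eq_or_lt with h0 | hpos
  · simpa [← h0, sub_eq_zero] using hle 0
  have hγ1 : γ ≤ 1 := by
    have := (abs_nonneg _).trans (hle 1)
    rw [pow_one] at this
    exact_mod_cast sub_nonneg.1 (nonneg_of_mul_nonneg_left this hpos)
  have hlim : Tendsto (fun k : ℕ ↦ (1 - γ : ℝ) ^ k * ν.real univ) atTop (𝓝 0) := by
    have := tendsto_pow_atTop_nhds_zero_of_lt_one (r := (1 - γ : ℝ))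
      (sub_nonneg.2 (mod_cast hγ1)) (sub_lt_self _ (mod_cast hγ))
    simpa using this.mul_const (ν.real univ)
  exact sub_eq_zero.1 <| abs_nonpos_iff.1 <| ge_of_tendsto' hlim hle

theorem preErgodic [IsProbabilityMeasure m] (h : IsDoeblinClass T m γ 𝓓) (hγ : 0 < γ)
    (hT : Measurable T) {C : Set (Set X)} (hC : ‹MeasurableSpace X› = .generateFrom C)
    (hCpi : IsPiSystem C) (hC𝓓 : ∀ A ∈ C, m.restrict A ∈ 𝓓) : PreErgodic T m := by
  refine ⟨fun s hs hTs ↦ ?_⟩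
  have hCs : ∀ A ∈ C, m (A ∩ s) = m s * m A := fun A hA ↦ by
    have hreal := h.real_eq_of_preimage_eq hγ hT hs hTs (hC𝓓 A hA)
    rw [measureReal_restrict_apply hs, measureReal_restrict_apply_univ, inter_comm,
      measureReal_def, measureReal_def, measureReal_def, ← ENNReal.toReal_mul,
      ENNReal.toReal_eq_toReal_iff' (by finiteness) (by finiteness)] at hreal
    exact hreal
  have hrestrict : m.restrict s = m s • m := by
    have : IsFiniteMeasure (m s • m) := ⟨by simp⟩
    refine ext_of_generate_finite C hC hCpi (fun A hA ↦ ?_) (by simp)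
    rw [Measure.restrict_apply (hC ▸ .basic A hA), hCs A hA,
      Measure.smul_apply, smul_eq_mul]
  have hzero : m s * m sᶜ = 0 := by
    rw [← smul_eq_mul, ← Measure.smul_apply, ← hrestrict, Measure.restrict_apply hs.compl,
      compl_inter_self, measure_empty]
  exact eventuallyConst_set'.2 ((mul_eq_zero.1 hzero).imp ae_eq_empty.2 ae_eq_univ.2)

end IsDoeblinClass

end Ergodic

theorem withDensity_add_left_of_aemeasurable {X : Type*} [MeasurableSpace X] {μ : Measure X}
    {u : X → ℝ≥0∞} (hu : AEMeasurable u μ) (v : X → ℝ≥0∞) :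
    μ.withDensity (fun x ↦ u x + v x) = μ.withDensity u + μ.withDensity v := by
  ext s hs
  simp only [Measure.add_apply, withDensity_apply _ hs, lintegral_add_left' hu.restrict]

/-! ### Nonincreasing densities on the unit interval -/

/-- Lebesgue measure on the unit interval, viewed as a measure on `ℝ`. -/
noncomputable abbrev unitLebesgue : Measure ℝ := volume.restrict (Ioo 0 1)

instance isProbabilityMeasure_unitLebesgue : IsProbabilityMeasure unitLebesgue := ⟨by simp⟩

theorem unitLebesgue_eq_add :
    unitLebesgue = volume.restrict (Ioo 0 (1 / 2)) + volume.restrict (Ioo (1 / 2) 1) := by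
  rw [unitLebesgue, Measure.restrict_congr_set (Ioo_ae_eq_Ico (a := (1 / 2 : ℝ))),
    ← Measure.restrict_union (disjoint_left.2 fun _ hx hx' ↦ hx'.1.not_gt hx.2) measurableSet_Ico,
    Ioo_union_Ico_eq_Ioo (by norm_num) (by norm_num)]

theorem mul_ofReal_le_withDensity_Iio {h : ℝ → ℝ≥0∞} {x : ℝ} (hh : AntitoneOn h (Ioo 0 1))
    (hx : x ∈ Ioo 0 1) : h x * ENNReal.ofReal x ≤ unitLebesgue.withDensity h (Iio x) := by
  rw [withDensity_apply _ measurableSet_Iio, Measure.restrict_restrict measurableSet_Iio,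
    inter_comm, Ioo_inter_Iio, min_eq_right hx.2.le]
  simpa using setLIntegral_mono' (μ := volume) (f := fun _ ↦ h x) measurableSet_Ioo fun y hy ↦
    hh ⟨hy.1, hy.2.trans hx.2⟩ hx hy.2.le

theorem withDensity_Ico_le {h : ℝ → ℝ≥0∞} {a b : ℝ} (hh : AntitoneOn h (Ioo 0 1))
    (ha : a ∈ Ioo 0 1) :
    unitLebesgue.withDensity h (Ico a b) ≤ h a * ENNReal.ofReal (b - a) := by
  rw [withDensity_apply _ measurableSet_Ico, Measure.restrict_restrict measurableSet_Ico]
  calc ∫⁻ y in Ico a b ∩ Ioo 0 1, h y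
      ≤ ∫⁻ _ in Ico a b ∩ Ioo 0 1, h a :=
        setLIntegral_mono' (measurableSet_Ico.inter measurableSet_Ioo) fun y hy ↦
          hh ha hy.2 hy.1.1
    _ ≤ ∫⁻ _ in Ico a b, h a := lintegral_mono_set inter_subset_left
    _ = h a * ENNReal.ofReal (b - a) := by simp

theorem withDensity_Iio_one (h : ℝ → ℝ≥0∞) :
    unitLebesgue.withDensity h (Iio 1) = unitLebesgue.withDensity h univ := by
  rw [withDensity_apply _ measurableSet_Iio, withDensity_apply _ .univ, Measure.restrict_univ,
    Measure.restrict_restrict measurableSet_Iio, inter_eq_right.2 fun y hy ↦ hy.2]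

theorem tendsto_withDensity_Iio {h : ℝ → ℝ≥0∞} {u : ℕ → ℝ}
    (hh : unitLebesgue.withDensity h univ ≠ ∞) (hu : Tendsto u atTop (𝓝 0)) :
    Tendsto (fun n ↦ unitLebesgue.withDensity h (Iio (u n))) atTop (𝓝 0) := by
  simp only [withDensity_apply _ measurableSet_Iio]
  refine tendsto_setLIntegral_zero (by simpa [withDensity_apply] using hh) ?_
  have hofReal : Tendsto (fun n ↦ ENNReal.ofReal (u n)) atTop (𝓝 0) := by
    simpa only [ENNReal.ofReal_zero] using ENNReal.tendsto_ofReal hu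
  refine tendsto_of_tendsto_of_tendsto_of_le_of_le tendsto_const_nhds hofReal
    (fun _ ↦ zero_le) fun n ↦ ?_
  calc unitLebesgue (Iio (u n)) = volume (Iio (u n) ∩ Ioo 0 1) :=
        Measure.restrict_apply measurableSet_Iio
    _ ≤ volume (Ioo 0 (u n)) := measure_mono fun y hy ↦ ⟨hy.2.1, hy.1⟩
    _ = ENNReal.ofReal (u n) := by simp

/-- The finite measures on `(0, 1)` with a nonincreasing density. -/
def antitoneDensityMeasures : Set (Measure ℝ) :=
  {ν | ∃ h, AntitoneOn h (Ioo 0 1) ∧ unitLebesgue.withDensity h univ ≠ ∞ ∧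
    ν = unitLebesgue.withDensity h}

/-! ### Maps with a convex left branch -/

/-- The left branch on `[0, 1/2]` of a full-branched map of the unit interval: increasing onto
`[0, 1]` and convex, with derivative bounded by `L`. The fixed point `0` may be neutral. Continuity
is imposed on all of `ℝ`, which makes the extension by the right branch a measurable map `ℝ → ℝ`. -/
structure IsConvexBranch (f : ℝ → ℝ) (L : ℝ≥0) : Prop where
  continuous : Continuous f
  map_zero : f 0 = 0
  map_half : f (1 / 2) = 1
  deriv_pos : ∀ y ∈ Ioo 0 (1 / 2), 0 < deriv f y
  deriv_le : ∀ y ∈ Ioo 0 (1 / 2), deriv f y ≤ L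
  monotoneOn_deriv : MonotoneOn (deriv f) (Ioo 0 (1 / 2))

/-- The interval map with left branch `f` and right branch `y ↦ 2 * y - 1`. -/
noncomputable def doublingExtension (f : ℝ → ℝ) (y : ℝ) : ℝ :=
  if y < 1 / 2 then f y else 2 * y - 1

/-- The inverse `(0, 1] → (0, 1/2]` of a left branch `f`. -/
noncomputable def inverseBranch (f : ℝ → ℝ) : ℝ → ℝ :=
  Function.invFunOn f (Ioc 0 (1 / 2))

/-- The Perron–Frobenius operator of `doublingExtension f`, acting on densities with respect to
Lebesgue measure; its values are meaningful on `(0, 1)` only. -/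
noncomputable def transferOperator (f : ℝ → ℝ) (h : ℝ → ℝ≥0∞) (x : ℝ) : ℝ≥0∞ :=
  h (inverseBranch f x) / ‖deriv f (inverseBranch f x)‖ₑ + h ((x + 1) / 2) / 2

/-- The candidate for an invariant density: the pointwise `liminf` of the densities obtained by
iterating the transfer operator on the density of Lebesgue measure. -/
noncomputable def liminfDensity (f : ℝ → ℝ) (x : ℝ) : ℝ≥0∞ :=
  liminf (fun n ↦ (transferOperator f)^[n] 1 x) atTop

theorem map_withDensity_right (f : ℝ → ℝ) (h : ℝ → ℝ≥0∞) :
    ((volume.restrict (Ioo (1 / 2) 1)).withDensity h).map (doublingExtension f) =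
      unitLebesgue.withDensity fun x ↦ h ((x + 1) / 2) / 2 := by
  have himage : (fun y : ℝ ↦ 2 * y - 1) '' Ioo (1 / 2) 1 = Ioo 0 1 := by
    rw [← image_image (fun y ↦ y - 1) (fun y ↦ 2 * y), image_mul_left_Ioo two_pos,
      image_sub_const_Ioo]
    norm_num
  have hmap := map_withDensity_restrict_eq (φ := fun y : ℝ ↦ 2 * y - 1) (φ' := fun _ ↦ 2)
    (ψ := fun x ↦ (x + 1) / 2) (by fun_prop) (measurableSet_Ioo (a := 1 / 2) (b := 1))
    (fun y _ ↦ by simpa using (((hasDerivAt_id y).const_mul 2).sub_const 1).hasDerivWithinAt)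
    (fun _ _ ↦ two_ne_zero) (fun y _ ↦ by ring) h
  rw [himage, Real.enorm_of_nonneg two_pos.le, ENNReal.ofReal_ofNat] at hmap
  rw [← hmap]
  exact Measure.map_congr <| (withDensity_absolutelyContinuous _ _).ae_le <|
    ae_restrict_of_forall_mem measurableSet_Ioo fun y hy ↦ if_neg hy.1.not_gt

theorem antitoneOn_add_one_div_two {h : ℝ → ℝ≥0∞} (hh : AntitoneOn h (Ioo 0 1)) :
    AntitoneOn (fun x ↦ h ((x + 1) / 2)) (Ioo 0 1) := fun x hx y hy hxy ↦
  hh ⟨by linarith [hx.1], by linarith [hx.2]⟩ ⟨by linarith [hy.1], by linarith [hy.2]⟩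
    (by linarith)

namespace IsConvexBranch

variable {f : ℝ → ℝ} {L : ℝ≥0} {h : ℝ → ℝ≥0∞} {x y : ℝ}

theorem strictMonoOn (hf : IsConvexBranch f L) : StrictMonoOn f (Icc 0 (1 / 2)) :=
  strictMonoOn_of_deriv_pos (convex_Icc _ _) hf.continuous.continuousOn
    (by simpa only [interior_Icc] using hf.deriv_pos)

theorem hasDerivAt (hf : IsConvexBranch f L) (hy : y ∈ Ioo 0 (1 / 2)) :
    HasDerivAt f (deriv f y) y :=
  (differentiableAt_of_deriv_ne_zero (hf.deriv_pos y hy).ne').hasDerivAt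

theorem one_le (hf : IsConvexBranch f L) : 1 ≤ L := by
  obtain ⟨c, hc, hslope⟩ := exists_deriv_eq_slope f (by norm_num : (0 : ℝ) < 1 / 2)
    hf.continuous.continuousOn
    fun y hy ↦ (hf.hasDerivAt hy).differentiableAt.differentiableWithinAt
  have hle := hf.deriv_le c hc
  rw [hslope, hf.map_zero, hf.map_half] at hle
  exact_mod_cast (by linarith : (1 : ℝ) ≤ L)

theorem measurable_doublingExtension (hf : IsConvexBranch f L) :
    Measurable (doublingExtension f) :=
  hf.continuous.measurable.ite measurableSet_Iio (by fun_prop)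

theorem surjOn (hf : IsConvexBranch f L) : SurjOn f (Ioc 0 (1 / 2)) (Ioc 0 1) := by
  have := intermediate_value_Ioc (by norm_num : (0 : ℝ) ≤ 1 / 2) hf.continuous.continuousOn
  rwa [hf.map_zero, hf.map_half] at this

theorem inverseBranch_mem_Ioc (hf : IsConvexBranch f L) (hx : x ∈ Ioc 0 1) :
    inverseBranch f x ∈ Ioc 0 (1 / 2) :=
  Function.invFunOn_mem (hf.surjOn hx)

theorem apply_inverseBranch (hf : IsConvexBranch f L) (hx : x ∈ Ioc 0 1) :
    f (inverseBranch f x) = x :=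
  Function.invFunOn_eq (hf.surjOn hx)

theorem leftInvOn_inverseBranch (hf : IsConvexBranch f L) :
    LeftInvOn (inverseBranch f) f (Ioc 0 (1 / 2)) :=
  (hf.strictMonoOn.injOn.mono Ioc_subset_Icc_self).leftInvOn_invFunOn

theorem lt_inverseBranch_iff (hf : IsConvexBranch f L) (hx : x ∈ Ioc 0 1)
    (hy : y ∈ Icc 0 (1 / 2)) : y < inverseBranch f x ↔ f y < x := by
  rw [← hf.strictMonoOn.lt_iff_lt hy (Ioc_subset_Icc_self (hf.inverseBranch_mem_Ioc hx)),
    hf.apply_inverseBranch hx]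

theorem inverseBranch_mem_Ioo (hf : IsConvexBranch f L) (hx : x ∈ Ioo 0 1) :
    inverseBranch f x ∈ Ioo 0 (1 / 2) := by
  have hx' := Ioo_subset_Ioc_self hx
  have hg := hf.inverseBranch_mem_Ioc hx'
  refine ⟨hg.1, hg.2.lt_of_ne fun heq ↦ hx.2.ne ?_⟩
  rw [← hf.apply_inverseBranch hx', heq, hf.map_half]

theorem monotoneOn_inverseBranch (hf : IsConvexBranch f L) :
    MonotoneOn (inverseBranch f) (Ioc 0 1) := fun x hx y hy hxy ↦ by
  rw [← hf.strictMonoOn.le_iff_le (Ioc_subset_Icc_self (hf.inverseBranch_mem_Ioc hx))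
    (Ioc_subset_Icc_self (hf.inverseBranch_mem_Ioc hy)), hf.apply_inverseBranch hx,
    hf.apply_inverseBranch hy]
  exact hxy

theorem image_Ioo (hf : IsConvexBranch f L) : f '' Ioo 0 (1 / 2) = Ioo 0 1 := by
  refine Subset.antisymm (image_subset_iff.2 fun y hy ↦ ?_) fun x hx ↦
    ⟨_, hf.inverseBranch_mem_Ioo hx, hf.apply_inverseBranch (Ioo_subset_Ioc_self hx)⟩
  have hmono := fun {a b : ℝ} ↦ hf.strictMonoOn (a := a) (b := b)
  constructor
  · simpa only [hf.map_zero] using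
      hmono (left_mem_Icc.2 (by norm_num)) (Ioo_subset_Icc_self hy) hy.1
  · simpa only [hf.map_half] using
      hmono (Ioo_subset_Icc_self hy) (right_mem_Icc.2 (by norm_num)) hy.2

theorem enorm_deriv_inverseBranch (hf : IsConvexBranch f L) (hx : x ∈ Ioo 0 1) :
    ‖deriv f (inverseBranch f x)‖ₑ = ENNReal.ofReal (deriv f (inverseBranch f x)) :=
  Real.enorm_of_nonneg (hf.deriv_pos _ (hf.inverseBranch_mem_Ioo hx)).le

theorem antitoneOn_transferOperator (hf : IsConvexBranch f L) (hh : AntitoneOn h (Ioo 0 1)) :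
    AntitoneOn (transferOperator f h) (Ioo 0 1) := fun x hx y hy hxy ↦ by
  have hgx := hf.inverseBranch_mem_Ioo hx
  have hgy := hf.inverseBranch_mem_Ioo hy
  have hgxy : inverseBranch f x ≤ inverseBranch f y :=
    hf.monotoneOn_inverseBranch (Ioo_subset_Ioc_self hx) (Ioo_subset_Ioc_self hy) hxy
  have hsub : Ioo (0 : ℝ) (1 / 2) ⊆ Ioo 0 1 := Ioo_subset_Ioo_right (by norm_num)
  simp only [transferOperator, hf.enorm_deriv_inverseBranch hx, hf.enorm_deriv_inverseBranch hy]
  gcongr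
  · exact hh (hsub hgx) (hsub hgy) hgxy
  · exact hf.monotoneOn_deriv hgx hgy hgxy
  · exact antitoneOn_add_one_div_two hh hx hy hxy

theorem antitoneOn_iterate_transferOperator (hf : IsConvexBranch f L)
    (hh : AntitoneOn h (Ioo 0 1)) (n : ℕ) :
    AntitoneOn ((transferOperator f)^[n] h) (Ioo 0 1) := by
  induction n with
  | zero => exact hh
  | succ n ih =>
    rw [Function.iterate_succ_apply']
    exact hf.antitoneOn_transferOperator ih

theorem map_withDensity_left (hf : IsConvexBranch f L) (h : ℝ → ℝ≥0∞) :
    ((volume.restrict (Ioo 0 (1 / 2))).withDensity h).map (doublingExtension f) =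
      unitLebesgue.withDensity fun x ↦
        h (inverseBranch f x) / ‖deriv f (inverseBranch f x)‖ₑ := by
  rw [unitLebesgue, ← hf.image_Ioo, ← map_withDensity_restrict_eq hf.continuous.measurable
    measurableSet_Ioo (fun y hy ↦ (hf.hasDerivAt hy).hasDerivWithinAt)
    (fun y hy ↦ (hf.deriv_pos y hy).ne')
    (hf.leftInvOn_inverseBranch.mono Ioo_subset_Ioc_self)]
  exact Measure.map_congr <| (withDensity_absolutelyContinuous _ _).ae_le <|
    ae_restrict_of_forall_mem measurableSet_Ioo fun y hy ↦ if_pos hy.2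

theorem map_withDensity_doublingExtension (hf : IsConvexBranch f L)
    (hh : AntitoneOn h (Ioo 0 1)) :
    (unitLebesgue.withDensity h).map (doublingExtension f) =
      unitLebesgue.withDensity (transferOperator f h) := by
  have hmeas : AEMeasurable (fun x ↦ h ((x + 1) / 2) / 2) unitLebesgue :=
    aemeasurable_restrict_of_antitoneOn measurableSet_Ioo fun x hx y hy hxy ↦
      ENNReal.div_le_div_right (antitoneOn_add_one_div_two hh hx hy hxy) 2
  conv_lhs => rw [unitLebesgue_eq_add, withDensity_add_measure,
    Measure.map_add _ _ hf.measurable_doublingExtension, hf.map_withDensity_left,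
    map_withDensity_right, add_comm, ← withDensity_add_left_of_aemeasurable hmeas]
  exact congrArg _ (funext fun x ↦ add_comm _ _)

theorem map_iterate_withDensity (hf : IsConvexBranch f L) (hh : AntitoneOn h (Ioo 0 1)) (n : ℕ) :
    (unitLebesgue.withDensity h).map (doublingExtension f)^[n] =
      unitLebesgue.withDensity ((transferOperator f)^[n] h) := by
  induction n with
  | zero => simp
  | succ n ih =>
    rw [Function.iterate_succ', Function.iterate_succ_apply', ← Measure.map_map
      hf.measurable_doublingExtension (hf.measurable_doublingExtension.iterate n), ih,
      hf.map_withDensity_doublingExtension (hf.antitoneOn_iterate_transferOperator hh n)]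

theorem withDensity_iterate_univ (hf : IsConvexBranch f L) (hh : AntitoneOn h (Ioo 0 1))
    (n : ℕ) : unitLebesgue.withDensity ((transferOperator f)^[n] h) univ =
      unitLebesgue.withDensity h univ := by
  rw [← hf.map_iterate_withDensity hh,
    Measure.map_apply (hf.measurable_doublingExtension.iterate n) .univ, preimage_univ]

theorem mapsTo_iterate_inverseBranch (hf : IsConvexBranch f L) (n : ℕ) :
    MapsTo (inverseBranch f)^[n] (Ioc 0 1) (Ioc 0 1) :=
  MapsTo.iterate (fun _ hx ↦ Ioc_subset_Ioc_right (by norm_num) (hf.inverseBranch_mem_Ioc hx)) n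

theorem withDensity_transferOperator_Iio_le (hf : IsConvexBranch f L)
    (hh : AntitoneOn h (Ioo 0 1)) (hx : x ∈ Ioc 0 1) :
    unitLebesgue.withDensity (transferOperator f h) (Iio x) ≤
      unitLebesgue.withDensity h (Iio (inverseBranch f x)) + h (1 / 2) * ENNReal.ofReal x := by
  have hpre : (doublingExtension f ⁻¹' Iio x ∩ Ioo 0 1 : Set ℝ) ⊆
      Iio (inverseBranch f x) ∪ Ico (1 / 2) ((x + 1) / 2) := fun y ⟨hyx, hy⟩ ↦ by
    rw [mem_preimage, mem_Iio, doublingExtension] at hyx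
    split_ifs at hyx with hy2
    · exact .inl ((hf.lt_inverseBranch_iff hx ⟨hy.1.le, hy2.le⟩).2 hyx)
    · exact .inr ⟨not_lt.1 hy2, by linarith⟩
  have hsupp : ∀ᵐ y ∂unitLebesgue.withDensity h, y ∈ Ioo (0 : ℝ) 1 :=
    (withDensity_absolutelyContinuous _ _).ae_le (ae_restrict_mem measurableSet_Ioo)
  rw [← hf.map_withDensity_doublingExtension hh,
    Measure.map_apply hf.measurable_doublingExtension measurableSet_Iio]
  calc unitLebesgue.withDensity h (doublingExtension f ⁻¹' Iio x)
      ≤ unitLebesgue.withDensity h (Iio (inverseBranch f x) ∪ Ico (1 / 2) ((x + 1) / 2)) :=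
        measure_mono_ae (hsupp.mono fun y hy hyx ↦ hpre ⟨hyx, hy⟩)
    _ ≤ unitLebesgue.withDensity h (Iio (inverseBranch f x)) +
          h (1 / 2) * ENNReal.ofReal ((x + 1) / 2 - 1 / 2) :=
        (measure_union_le _ _).trans
          (by gcongr; exact withDensity_Ico_le hh (by norm_num))
    _ ≤ _ := by gcongr; linarith [hx.1]

theorem withDensity_iterate_Iio_le (hf : IsConvexBranch f L) (hh : AntitoneOn h (Ioo 0 1))
    {n : ℕ} {c : ℝ≥0∞} (hc : ∀ k < n, (transferOperator f)^[k] h (1 / 2) ≤ c)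
    (hx : x ∈ Ioc 0 1) :
    unitLebesgue.withDensity ((transferOperator f)^[n] h) (Iio x) ≤
      unitLebesgue.withDensity h (Iio ((inverseBranch f)^[n] x)) +
        c * ∑' k, ENNReal.ofReal ((inverseBranch f)^[k] x) := by
  induction n generalizing x with
  | zero => exact le_self_add
  | succ n ih =>
    have hg : inverseBranch f x ∈ Ioc 0 1 := hf.mapsTo_iterate_inverseBranch 1 hx
    rw [tsum_eq_zero_add' ENNReal.summable, Function.iterate_succ_apply']
    calc unitLebesgue.withDensity (transferOperator f ((transferOperator f)^[n] h)) (Iio x)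
        ≤ unitLebesgue.withDensity ((transferOperator f)^[n] h) (Iio (inverseBranch f x)) +
            c * ENNReal.ofReal x := by
          refine (hf.withDensity_transferOperator_Iio_le
            (hf.antitoneOn_iterate_transferOperator hh n) hx).trans ?_
          gcongr
          exact hc n n.lt_succ_self
      _ ≤ unitLebesgue.withDensity h (Iio ((inverseBranch f)^[n] (inverseBranch f x))) +
            c * (∑' k, ENNReal.ofReal ((inverseBranch f)^[k] (inverseBranch f x))) +
            c * ENNReal.ofReal x := by
          gcongr
          exact ih (fun k hk ↦ hc k (hk.trans n.lt_succ_self)) hg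
      _ = _ := by
          simp only [Function.iterate_succ_apply, Function.iterate_zero_apply]
          ring

theorem apply_half_le_mul_transferOperator (hf : IsConvexBranch f L)
    (hh : AntitoneOn h (Ioo 0 1)) (hx : x ∈ Ioo 0 1) :
    h (1 / 2) ≤ L * transferOperator f h x := by
  have hg := hf.inverseBranch_mem_Ioo hx
  have hL : (L : ℝ≥0∞) ≠ 0 := ENNReal.coe_ne_zero.2 (zero_lt_one.trans_le hf.one_le).ne'
  rw [← ENNReal.div_le_iff' hL ENNReal.coe_ne_top]
  refine le_add_right ?_
  rw [hf.enorm_deriv_inverseBranch hx]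
  gcongr
  · exact hh ⟨hg.1, by linarith [hg.2]⟩ ⟨by norm_num, by norm_num⟩ hg.2.le
  · exact ENNReal.ofReal_le_coe.2 (hf.deriv_le _ hg)

theorem iterate_apply_half_le_pow_mul (hf : IsConvexBranch f L) (hh : AntitoneOn h (Ioo 0 1))
    {k n : ℕ} (hkn : k ≤ n) :
    (transferOperator f)^[k] h (1 / 2) ≤ L ^ n * (transferOperator f)^[n] h (1 / 2) := by
  induction n, hkn using Nat.le_induction with
  | base => exact le_mul_of_one_le_left' (one_le_pow₀ (mod_cast hf.one_le))
  | succ n _ ih =>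
    rw [Function.iterate_succ_apply', pow_succ, mul_assoc]
    exact ih.trans <| by
      gcongr
      exact hf.apply_half_le_mul_transferOperator
        (hf.antitoneOn_iterate_transferOperator hh n) (by norm_num)

theorem iterate_apply_half_le (hf : IsConvexBranch f L) (hh : AntitoneOn h (Ioo 0 1)) (n : ℕ) :
    (transferOperator f)^[n] h (1 / 2) ≤ 2 * unitLebesgue.withDensity h univ := by
  have hle := (mul_ofReal_le_withDensity_Iio (x := 1 / 2)
    (hf.antitoneOn_iterate_transferOperator hh n) (by norm_num)).trans
      ((measure_mono (subset_univ _)).trans_eq (hf.withDensity_iterate_univ hh n))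
  rwa [one_div, ENNReal.ofReal_inv_of_pos two_pos, ENNReal.ofReal_ofNat, ← div_eq_mul_inv,
    ENNReal.div_le_iff' two_ne_zero ENNReal.ofNat_ne_top, ← one_div] at hle

theorem eventually_withDensity_iterate_Iio_le (hf : IsConvexBranch f L)
    (hsum : Summable fun n ↦ (inverseBranch f)^[n] 1) :
    ∃ K, ∀ h, AntitoneOn h (Ioo 0 1) → unitLebesgue.withDensity h univ ≠ ∞ →
      ∀ᶠ m in atTop, unitLebesgue.withDensity ((transferOperator f)^[m] h)
        (Iio ((inverseBranch f)^[K] 1)) ≤ unitLebesgue.withDensity h univ / 2 := by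
  obtain ⟨K, hK⟩ := ((ENNReal.tendsto_sum_nat_add _ hsum.tsum_ofReal_ne_top).eventually_le_const
    (u := 8⁻¹) (by simp)).exists
  refine ⟨K, fun h hh hfin ↦ ?_⟩
  set M := unitLebesgue.withDensity h univ with hM
  rcases eq_or_ne M 0 with hM0 | hM0
  · refine .of_forall fun m ↦ (measure_mono (subset_univ _)).trans ?_
    rw [hf.withDensity_iterate_univ hh, ← hM, hM0]
    exact zero_le
  have hsmall : ∀ᶠ m in atTop,
      unitLebesgue.withDensity h (Iio ((inverseBranch f)^[m + K] 1)) ≤ M / 4 :=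
    ((tendsto_add_atTop_iff_nat K).2 (tendsto_withDensity_Iio hfin
      hsum.tendsto_atTop_zero)).eventually_le_const (ENNReal.div_pos hM0 (by simp))
  filter_upwards [hsmall] with m hm
  calc unitLebesgue.withDensity ((transferOperator f)^[m] h) (Iio ((inverseBranch f)^[K] 1))
      ≤ unitLebesgue.withDensity h (Iio ((inverseBranch f)^[m + K] 1)) +
          2 * M * ∑' k, ENNReal.ofReal ((inverseBranch f)^[k + K] 1) := by
        simpa only [Function.iterate_add_apply] using hf.withDensity_iterate_Iio_le hh
          (fun k _ ↦ hf.iterate_apply_half_le hh k)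
          (hf.mapsTo_iterate_inverseBranch K (right_mem_Ioc.2 one_pos))
    _ ≤ M / 4 + 2 * M * 8⁻¹ := by gcongr
    _ = M / 2 := by
        rw [← ENNReal.toReal_eq_toReal_iff' (by finiteness) (by finiteness),
          ENNReal.toReal_add (by finiteness) (by finiteness)]
        simp only [ENNReal.toReal_div, ENNReal.toReal_mul, ENNReal.toReal_inv,
          ENNReal.toReal_ofNat]
        ring

theorem univ_le_mul_iterate (hf : IsConvexBranch f L) (hh : AntitoneOn h (Ioo 0 1))
    (hfin : unitLebesgue.withDensity h univ ≠ ∞) {K : ℕ}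
    (htight : unitLebesgue.withDensity h (Iio ((inverseBranch f)^[K] 1)) ≤
      unitLebesgue.withDensity h univ / 2) (hx : x ∈ Ioo 0 1) :
    unitLebesgue.withDensity h univ ≤
      2 * (L ^ (K + 1) * ∑' k, ENNReal.ofReal ((inverseBranch f)^[k] 1)) *
        (transferOperator f)^[K + 1] h x := by
  set M := unitLebesgue.withDensity h univ
  set W := ∑' k, ENNReal.ofReal ((inverseBranch f)^[k] 1)
  have hhK := hf.antitoneOn_iterate_transferOperator hh K
  have hbound : M ≤ M / 2 + L ^ K * (transferOperator f)^[K] h (1 / 2) * W :=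
    calc M = unitLebesgue.withDensity ((transferOperator f)^[K] h) (Iio 1) := by
          rw [withDensity_Iio_one, hf.withDensity_iterate_univ hh]
      _ ≤ unitLebesgue.withDensity h (Iio ((inverseBranch f)^[K] 1)) +
            L ^ K * (transferOperator f)^[K] h (1 / 2) * W :=
          hf.withDensity_iterate_Iio_le hh
            (fun k hk ↦ hf.iterate_apply_half_le_pow_mul hh hk.le) (right_mem_Ioc.2 one_pos)
      _ ≤ _ := by gcongr
  have hhalf : M / 2 ≤ L ^ K * (transferOperator f)^[K] h (1 / 2) * W := by
    rw [← ENNReal.sub_half hfin]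
    exact tsub_le_iff_left.2 hbound
  calc M = 2 * (M / 2) := (ENNReal.mul_div_cancel two_ne_zero ENNReal.ofNat_ne_top).symm
    _ ≤ 2 * (L ^ K * (L * (transferOperator f)^[K + 1] h x) * W) := by
        rw [Function.iterate_succ_apply']
        refine mul_le_mul_right (hhalf.trans ?_) 2
        gcongr
        exact hf.apply_half_le_mul_transferOperator hhK hx
    _ = _ := by ring

theorem eventually_mul_univ_le_iterate (hf : IsConvexBranch f L)
    (hsum : Summable fun n ↦ (inverseBranch f)^[n] 1) :
    ∃ γ : ℝ≥0, 0 < γ ∧ ∀ h, AntitoneOn h (Ioo 0 1) → unitLebesgue.withDensity h univ ≠ ∞ →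
      ∀ᶠ n in atTop, ∀ x ∈ Ioo 0 1,
        γ * unitLebesgue.withDensity h univ ≤ (transferOperator f)^[n] h x := by
  obtain ⟨K, hK⟩ := hf.eventually_withDensity_iterate_Iio_le hsum
  set W := ∑' k, ENNReal.ofReal ((inverseBranch f)^[k] 1)
  have hW0 : W ≠ 0 := fun h0 ↦ by simpa using ENNReal.tsum_eq_zero.1 h0 0
  have hL : (L : ℝ≥0∞) ≠ 0 := ENNReal.coe_ne_zero.2 (zero_lt_one.trans_le hf.one_le).ne'
  set C := 2 * (L ^ (K + 1) * W) with hC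
  have hC0 : C ≠ 0 := by simp [hC, hW0, hL]
  have hCtop : C ≠ ∞ := by
    have : W ≠ ∞ := hsum.tsum_ofReal_ne_top
    finiteness
  refine ⟨C⁻¹.toNNReal, ENNReal.toNNReal_pos (by simpa using hCtop) (by simpa using hC0),
    fun h hh hfin ↦ ?_⟩
  rw [← map_add_atTop_eq_nat (K + 1), eventually_map]
  filter_upwards [hK h hh hfin] with m hm x hx
  have huniv := hf.withDensity_iterate_univ hh m
  rw [ENNReal.coe_toNNReal (ENNReal.inv_ne_top.2 hC0), ENNReal.inv_mul_le_iff hC0 hCtop,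
    add_comm m, Function.iterate_add_apply, ← huniv]
  exact hf.univ_le_mul_iterate (hf.antitoneOn_iterate_transferOperator hh m)
    (huniv ▸ hfin) (huniv ▸ hm) hx

theorem isDoeblinClass_antitoneDensityMeasures (hf : IsConvexBranch f L)
    (hsum : Summable fun n ↦ (inverseBranch f)^[n] 1) :
    ∃ γ : ℝ≥0, 0 < γ ∧
      IsDoeblinClass (doublingExtension f) unitLebesgue γ antitoneDensityMeasures := by
  obtain ⟨γ, hγ, hmin⟩ := hf.eventually_mul_univ_le_iterate hsum
  refine ⟨γ, hγ, ?_, ?_⟩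
  · rintro _ ⟨h, -, hfin, rfl⟩
    exact ⟨hfin.lt_top⟩
  rintro _ ⟨h, hh, hfin, rfl⟩
  obtain ⟨n, hn⟩ := (hmin h hh hfin).exists
  set c := γ * unitLebesgue.withDensity h univ
  refine ⟨n, unitLebesgue.withDensity fun x ↦ (transferOperator f)^[n] h x - c,
    ⟨_, fun x hx y hy hxy ↦ ?_, ?_, rfl⟩, ?_⟩
  · exact tsub_le_tsub_right (hf.antitoneOn_iterate_transferOperator hh n hx hy hxy) c
  · refine ne_top_of_le_ne_top (hf.withDensity_iterate_univ hh n ▸ hfin) ?_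
    exact withDensity_mono (.of_forall fun x ↦ tsub_le_self) univ
  · rw [hf.map_iterate_withDensity hh, ← withDensity_const,
      ← withDensity_add_left_of_aemeasurable aemeasurable_const]
    exact withDensity_congr_ae <| ae_restrict_of_forall_mem measurableSet_Ioo fun x hx ↦
      (add_tsub_cancel_of_le (hn x hx)).symm

theorem preErgodic (hf : IsConvexBranch f L)
    (hsum : Summable fun n ↦ (inverseBranch f)^[n] 1) :
    PreErgodic (doublingExtension f) unitLebesgue := by
  obtain ⟨γ, hγ, hD⟩ := hf.isDoeblinClass_antitoneDensityMeasures hsum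
  refine hD.preErgodic hγ hf.measurable_doublingExtension
    ((BorelSpace.measurable_eq (α := ℝ)).trans (borel_eq_generateFrom_Iic ℝ)) isPiSystem_Iic ?_
  rintro _ ⟨a, rfl⟩
  rw [← withDensity_indicator_one measurableSet_Iic]
  refine ⟨_, fun x _ y _ hxy ↦ ?_, ?_, rfl⟩
  · exact indicator_apply_le' (fun hy ↦ (indicator_of_mem (mem_Iic.2 (hxy.trans hy)) 1).ge)
      fun _ ↦ zero_le
  · rw [withDensity_indicator_one measurableSet_Iic]
    exact measure_ne_top _ _

theorem transferOperator_liminf_le (hf : IsConvexBranch f L) (u : ℕ → ℝ → ℝ≥0∞)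
    (hx : x ∈ Ioo 0 1) : transferOperator f (fun y ↦ liminf (fun n ↦ u n y) atTop) x ≤
      liminf (fun n ↦ transferOperator f (u n) x) atTop := by
  have hderiv : ‖deriv f (inverseBranch f x)‖ₑ ≠ 0 :=
    enorm_ne_zero.2 (hf.deriv_pos _ (hf.inverseBranch_mem_Ioo hx)).ne'
  simp only [transferOperator, ENNReal.div_eq_inv_mul]
  rw [← ENNReal.liminf_const_mul_of_ne_top (ENNReal.inv_ne_top.2 hderiv),
    ← ENNReal.liminf_const_mul_of_ne_top (ENNReal.inv_ne_top.2 two_ne_zero)]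
  exact liminf_add_liminf_le _ _

theorem measurePreserving_withDensity_of_le (hf : IsConvexBranch f L)
    (hh : AntitoneOn h (Ioo 0 1)) (hfin : unitLebesgue.withDensity h univ ≠ ∞)
    (hle : ∀ x ∈ Ioo 0 1, transferOperator f h x ≤ h x) :
    MeasurePreserving (doublingExtension f) (unitLebesgue.withDensity h)
      (unitLebesgue.withDensity h) := by
  refine ⟨hf.measurable_doublingExtension, ?_⟩
  rw [hf.map_withDensity_doublingExtension hh]
  have hmass : unitLebesgue.withDensity (transferOperator f h) univ =
      unitLebesgue.withDensity h univ := hf.withDensity_iterate_univ hh 1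
  refine withDensity_congr_ae <| ae_eq_of_ae_le_of_lintegral_le
    (ae_restrict_of_forall_mem measurableSet_Ioo hle) ?_
    (aemeasurable_restrict_of_antitoneOn measurableSet_Ioo hh) ?_
  · rwa [← setLIntegral_univ, ← withDensity_apply _ .univ, hmass]
  · rw [← setLIntegral_univ, ← setLIntegral_univ (transferOperator f h),
      ← withDensity_apply _ .univ, ← withDensity_apply _ .univ, hmass]

theorem antitoneOn_liminfDensity (hf : IsConvexBranch f L) :
    AntitoneOn (liminfDensity f) (Ioo 0 1) := fun _ hx _ hy hxy ↦
  liminf_le_liminf <| .of_forall fun n ↦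
    hf.antitoneOn_iterate_transferOperator antitoneOn_const n hx hy hxy

theorem transferOperator_liminfDensity_le (hf : IsConvexBranch f L) (hx : x ∈ Ioo 0 1) :
    transferOperator f (liminfDensity f) x ≤ liminfDensity f x :=
  calc transferOperator f (liminfDensity f) x
      ≤ liminf (fun n ↦ transferOperator f ((transferOperator f)^[n] 1) x) atTop :=
        hf.transferOperator_liminf_le _ hx
    _ = liminf (fun n ↦ (transferOperator f)^[n + 1] 1 x) atTop := by
        simp only [Function.iterate_succ_apply']
    _ = liminfDensity f x := liminf_nat_add (fun n ↦ (transferOperator f)^[n] 1 x) 1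

theorem withDensity_liminfDensity_univ_le (hf : IsConvexBranch f L) :
    unitLebesgue.withDensity (liminfDensity f) univ ≤ 1 := by
  have hmass : ∀ n, ∫⁻ x, (transferOperator f)^[n] 1 x ∂unitLebesgue = 1 := fun n ↦ by
    rw [← setLIntegral_univ, ← withDensity_apply _ .univ,
      hf.withDensity_iterate_univ (h := 1) antitoneOn_const, withDensity_one, measure_univ]
  rw [withDensity_apply _ .univ, setLIntegral_univ]
  refine (lintegral_liminf_le' fun n ↦ aemeasurable_restrict_of_antitoneOn measurableSet_Ioo
    (hf.antitoneOn_iterate_transferOperator (h := 1) antitoneOn_const n)).trans ?_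
  simp only [hmass, liminf_const, le_refl]

theorem withDensity_liminfDensity_univ_pos (hf : IsConvexBranch f L)
    (hsum : Summable fun n ↦ (inverseBranch f)^[n] 1) :
    0 < unitLebesgue.withDensity (liminfDensity f) univ := by
  obtain ⟨γ, hγ, hmin⟩ := hf.eventually_mul_univ_le_iterate hsum
  have hle : ∀ x ∈ Ioo 0 1, (γ : ℝ≥0∞) ≤ liminfDensity f x := fun x hx ↦ by
    refine le_liminf_of_le (by isBoundedDefault) ?_
    filter_upwards [hmin 1 antitoneOn_const (by simp)] with n hn
    simpa using hn x hx
  calc (0 : ℝ≥0∞) < γ := ENNReal.coe_pos.2 hγ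
    _ = unitLebesgue.withDensity (fun _ ↦ γ) univ := by simp
    _ ≤ _ := withDensity_mono (ae_restrict_of_forall_mem measurableSet_Ioo hle) univ

theorem exists_measurePreserving (hf : IsConvexBranch f L)
    (hsum : Summable fun n ↦ (inverseBranch f)^[n] 1) :
    ∃ μ : Measure ℝ, IsProbabilityMeasure μ ∧ μ ≪ unitLebesgue ∧
      MeasurePreserving (doublingExtension f) μ μ := by
  set μ := unitLebesgue.withDensity (liminfDensity f)
  have hfin : IsFiniteMeasure μ :=
    ⟨hf.withDensity_liminfDensity_univ_le.trans_lt ENNReal.one_lt_top⟩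
  have hne : NeZero μ :=
    ⟨Measure.measure_univ_pos.1 (hf.withDensity_liminfDensity_univ_pos hsum)⟩
  have hμ : MeasurePreserving (doublingExtension f) μ μ :=
    hf.measurePreserving_withDensity_of_le hf.antitoneOn_liminfDensity (measure_ne_top μ univ)
      fun _ ↦ hf.transferOperator_liminfDensity_le
  exact ⟨(μ univ)⁻¹ • μ, inferInstance, (withDensity_absolutelyContinuous _ _).smul_left _,
    hμ.smul_measure _⟩

end IsConvexBranch

theorem absolutelyContinuous_unitLebesgue_iff {μ : Measure ℝ} :
    μ ≪ unitLebesgue ↔ μ (Icc (0 : ℝ) 1)ᶜ = 0 ∧ μ ≪ volume := by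
  constructor
  · refine fun h ↦ ⟨h ?_, h.trans Measure.restrict_le_self.absolutelyContinuous⟩
    rw [Measure.restrict_apply measurableSet_Icc.compl, (disjoint_compl_left_iff_subset.2
      Ioo_subset_Icc_self).inter_eq, measure_empty]
  · rintro ⟨hIcc, hvol⟩
    rw [← Measure.restrict_eq_self_of_ae_mem (s := Icc (0 : ℝ) 1) (μ := μ) hIcc, unitLebesgue,
      Measure.restrict_congr_set Ioo_ae_eq_Icc]
    exact hvol.restrict _

theorem lsv_exists_unique_acip_general {f : ℝ → ℝ} {L : ℝ≥0} (hf : IsConvexBranch f L)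
    (hsum : Summable fun n ↦ (inverseBranch f)^[n] 1) :
    ∃ μ : Measure ℝ, IsProbabilityMeasure μ ∧ μ (Icc (0 : ℝ) 1)ᶜ = 0 ∧ μ ≪ volume ∧
      MeasurePreserving (doublingExtension f) μ μ ∧ Ergodic (doublingExtension f) μ ∧
      ∀ ν : Measure ℝ, IsProbabilityMeasure ν → ν (Icc (0 : ℝ) 1)ᶜ = 0 → ν ≪ volume →
        MeasurePreserving (doublingExtension f) ν ν → ν = μ := by
  have herg := hf.preErgodic hsum
  obtain ⟨μ, hμ, hac, hinv⟩ := hf.exists_measurePreserving hsum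
  obtain ⟨hIcc, hvol⟩ := absolutelyContinuous_unitLebesgue_iff.1 hac
  exact ⟨μ, hμ, hIcc, hvol, hinv, ⟨hinv, preErgodic_of_absolutelyContinuous herg hac⟩,
    fun ν hν hνIcc hνvol hνinv ↦ eq_of_preErgodic_of_absolutelyContinuous herg hinv hνinv hac
      (absolutelyContinuous_unitLebesgue_iff.2 ⟨hνIcc, hνvol⟩)⟩

/-! ### The Liverani–Saussol–Vaienti branch -/

/-- The left branch of the map `lsv z`. -/
noncomputable def lsvBranch (z y : ℝ) : ℝ := y * (1 + 2 ^ z * y ^ z)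

theorem lsv_eq_doublingExtension (z : ℝ) : lsv z = doublingExtension (lsvBranch z) := rfl

theorem lsvBranch_of_nonneg (z : ℝ) {y : ℝ} (hy : 0 ≤ y) :
    lsvBranch z y = y * (1 + (2 * y) ^ z) := by
  rw [lsvBranch, Real.mul_rpow two_pos.le hy]

theorem hasDerivAt_lsvBranch (z : ℝ) {y : ℝ} (hy : 0 < y) :
    HasDerivAt (lsvBranch z) (1 + (1 + z) * (2 * y) ^ z) y := by
  have hpow := ((Real.hasDerivAt_rpow_const (p := z) (.inl hy.ne')).const_mul (2 ^ z)).const_add 1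
  refine ((hasDerivAt_id y).mul hpow).congr_deriv ?_
  rw [Real.rpow_sub_one hy.ne', Real.mul_rpow two_pos.le hy.le, id]
  field_simp
  ring

theorem isConvexBranch_lsvBranch {z : ℝ} (hz : 0 ≤ z) :
    IsConvexBranch (lsvBranch z) (2 + z).toNNReal where
  continuous := continuous_id.mul <| continuous_const.add <| continuous_const.mul <|
    continuous_id.rpow_const fun _ ↦ .inr hz
  map_zero := zero_mul _
  map_half := by rw [lsvBranch_of_nonneg z (by norm_num)]; norm_num
  deriv_pos y hy := by
    rw [(hasDerivAt_lsvBranch z hy.1).deriv]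
    have := hy.1
    positivity
  deriv_le y hy := by
    rw [(hasDerivAt_lsvBranch z hy.1).deriv, Real.coe_toNNReal _ (by linarith)]
    have hpow : (2 * y) ^ z ≤ 1 :=
      Real.rpow_le_one (by linarith [hy.1]) (by linarith [hy.2]) hz
    nlinarith
  monotoneOn_deriv x hx y hy hxy := by
    rw [(hasDerivAt_lsvBranch z hx.1).deriv, (hasDerivAt_lsvBranch z hy.1).deriv]
    have := hx.1
    gcongr

theorem one_sub_mul_sub_le_rpow_mul_sub {z w x : ℝ} (hz0 : 0 ≤ z) (hz1 : z ≤ 1) (hw : 0 ≤ w)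
    (hx : 0 < x) : (1 - z) * (x - w) ≤ x ^ z * (x ^ (1 - z) - w ^ (1 - z)) := by
  have hconcave : (w / x) ^ (1 - z) ≤ 1 + (1 - z) * (w / x - 1) := by
    have := rpow_one_add_le_one_add_mul_self (s := w / x - 1)
      (by linarith [div_nonneg hw hx.le]) (sub_nonneg.2 hz1) (by linarith)
    rwa [add_sub_cancel] at this
  have hxx : x ^ z * x ^ (1 - z) = x := by
    rw [← Real.rpow_add hx, add_sub_cancel, Real.rpow_one]
  have hww : x ^ z * w ^ (1 - z) = x * (w / x) ^ (1 - z) := by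
    rw [Real.div_rpow hw hx.le]
    field_simp
    rw [mul_right_comm, hxx, mul_comm]
  calc (1 - z) * (x - w) = x - x * (1 + (1 - z) * (w / x - 1)) := by
        field_simp
        ring
    _ ≤ x - x * (w / x) ^ (1 - z) := by gcongr
    _ = x ^ z * (x ^ (1 - z) - w ^ (1 - z)) := by rw [mul_sub, hxx, hww]

theorem one_sub_mul_lsvBranch_le {z w : ℝ} (hz0 : 0 ≤ z) (hz1 : z ≤ 1)
    (hw : w ∈ Ioc 0 (1 / 2)) :
    (1 - z) * lsvBranch z w ≤ 2 * (lsvBranch z w ^ (1 - z) - w ^ (1 - z)) := by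
  rw [lsvBranch_of_nonneg z hw.1.le]
  set t := (2 * w) ^ z
  set x := w * (1 + t) with hx
  have hw0 : 0 < w := hw.1
  have ht0 : 0 < t := Real.rpow_pos_of_pos (by linarith) z
  have ht1 : t ≤ 1 := Real.rpow_le_one (by linarith) (by linarith [hw.2]) hz0
  have hx0 : 0 < x := by positivity
  have hwx : w ≤ x := by nlinarith
  have hx2 : x ≤ 2 * w := by nlinarith
  have hxt : x ^ z ≤ t := Real.rpow_le_rpow hx0.le hx2 hz0
  have hdiff : 0 ≤ x ^ (1 - z) - w ^ (1 - z) :=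
    sub_nonneg.2 (Real.rpow_le_rpow hw0.le hwx (sub_nonneg.2 hz1))
  have hw_le : (1 - z) * w ≤ x ^ (1 - z) - w ^ (1 - z) := by
    refine le_of_mul_le_mul_left ?_ ht0
    calc t * ((1 - z) * w) = (1 - z) * (x - w) := by rw [hx]; ring
      _ ≤ x ^ z * (x ^ (1 - z) - w ^ (1 - z)) :=
          one_sub_mul_sub_le_rpow_mul_sub hz0 hz1 hw0.le hx0
      _ ≤ t * (x ^ (1 - z) - w ^ (1 - z)) := by gcongr
  calc (1 - z) * x ≤ (1 - z) * (2 * w) := by gcongr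
    _ ≤ 2 * (x ^ (1 - z) - w ^ (1 - z)) := by linarith

theorem summable_iterate_inverseBranch_lsvBranch {z : ℝ} (hz0 : 0 ≤ z) (hz1 : z < 1) :
    Summable fun n ↦ (inverseBranch (lsvBranch z))^[n] 1 := by
  have hf := isConvexBranch_lsvBranch hz0
  set a : ℕ → ℝ := fun n ↦ (inverseBranch (lsvBranch z))^[n] 1
  have ha : ∀ n, a n ∈ Ioc 0 1 := fun n ↦
    hf.mapsTo_iterate_inverseBranch n (right_mem_Ioc.2 one_pos)
  have hstep : ∀ n, (1 - z) * a n ≤ 2 * (a n ^ (1 - z) - a (n + 1) ^ (1 - z)) := fun n ↦ by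
    have := one_sub_mul_lsvBranch_le hz0 hz1.le (hf.inverseBranch_mem_Ioc (ha n))
    rwa [hf.apply_inverseBranch (ha n),
      ← Function.iterate_succ_apply' (inverseBranch (lsvBranch z))] at this
  refine summable_of_sum_range_le (c := 2 / (1 - z)) (fun n ↦ (ha n).1.le) fun n ↦ ?_
  rw [le_div_iff₀' (sub_pos.2 hz1), Finset.mul_sum]
  calc ∑ k ∈ Finset.range n, (1 - z) * a k
      ≤ ∑ k ∈ Finset.range n, 2 * (a k ^ (1 - z) - a (k + 1) ^ (1 - z)) :=
        Finset.sum_le_sum fun k _ ↦ hstep k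
    _ = 2 * (a 0 ^ (1 - z) - a n ^ (1 - z)) := by
        rw [← Finset.mul_sum, Finset.sum_range_sub' fun k ↦ a k ^ (1 - z)]
    _ ≤ 2 := by
        have h0 : a 0 ^ (1 - z) = 1 := Real.one_rpow _
        linarith [Real.rpow_nonneg (ha n).1.le (1 - z)]

/-- For every `z ∈ (0,1)` the LSV map `f_z` admits a unique Borel probability
measure on `[0,1]` which is `f_z`-invariant and absolutely continuous with respect to
Lebesgue measure; moreover this measure is ergodic for `f_z`. -/
theorem lsv_exists_unique_acip (z : ℝ) (hz : z ∈ Set.Ioo (0 : ℝ) 1) :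
    ∃ μ : Measure ℝ, IsProbabilityMeasure μ ∧ μ (Set.Icc (0 : ℝ) 1)ᶜ = 0 ∧
      μ ≪ volume ∧ MeasurePreserving (lsv z) μ μ ∧ Ergodic (lsv z) μ ∧
      ∀ ν : Measure ℝ, IsProbabilityMeasure ν → ν (Set.Icc (0 : ℝ) 1)ᶜ = 0 →
        ν ≪ volume → MeasurePreserving (lsv z) ν ν → ν = μ := by
  rw [lsv_eq_doublingExtension z]
  exact lsv_exists_unique_acip_general (isConvexBranch_lsvBranch hz.1.le)
    (summable_iterate_inverseBranch_lsvBranch hz.1.le hz.2)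
end

section
/- Let z ∈ (0,1) and let μ be the unique absolutely continuous f_z-invariant Borel probability measure on [0,1]. For every Hölder continuous φ : [0,1] → ℝ and every bounded measurable ψ : [0,1] → ℝ there exists a constant C > 0 such that for all n ≥ 1, |∫ φ·(ψ ∘ f_z^n) dμ − (∫ φ dμ)(∫ ψ dμ)| ≤ C n^{−(1/z − 1)}. -/
open MeasureTheory Set NNReal

/-!
The preimages `x_n` of `1` along the left branch approach the neutral fixed point `0` at the rate
`n ^ (-1 / z)`. The transfer operator preserves a class of densities whose distortion is Hölder on
the logarithmic scale, and the images of Lebesgue measure have densities at most `6 * x ^ (-z)`. So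
for a density dominated by such an image the mass in `(0, x_n)`, which has not escaped after `n`
steps, is `O(n ^ (-(1 / z - 1)))`.

Two densities of the class of equal mass can be matched: after `n` steps, with `n` so large that
half of the mass lies outside `(0, x_n)`, both dominate a fixed fraction of the mass spread
uniformly over `(1 / 2, 1)`, and subtracting it leaves two densities of the class. The remaining
mass decreases geometrically with the number of matchings, and by the tail bound waiting times that
grow geometrically suffice. Since their sum is comparable to the last one, memory is lost in `L¹` at
the rate of the tail.

After adding a constant, a Hölder observable times the density of an image of Lebesgue measure is
again in the class up to a scalar, so correlations decay uniformly with respect to these images. By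
loss of memory the images converge to the invariant measure, and the bound passes to the limit.
-/

namespace LSV

open Filter Topology

/-! ### Integral estimates -/

section Integrals

variable {α : Type*} [MeasurableSpace α] {ν : Measure α} {f ψ : α → ℝ} {M : ℝ}

lemma integrable_mul_of_abs_le (hf : Integrable f ν) (hψ : Measurable ψ) (hψM : ∀ x, |ψ x| ≤ M) :
    Integrable (fun x ↦ f x * ψ x) ν :=
  hf.mul_bdd (c := M) hψ.aestronglyMeasurable (ae_of_all _ hψM)

lemma integrable_of_abs_le [IsFiniteMeasure ν] (hψ : Measurable ψ) (hψM : ∀ x, |ψ x| ≤ M) :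
    Integrable ψ ν :=
  .of_bound hψ.aestronglyMeasurable M (ae_of_all _ hψM)

lemma one_le_integral_of_one_le [IsProbabilityMeasure ν] (hf : Integrable f ν)
    (hf1 : ∀ x, 1 ≤ f x) : 1 ≤ ∫ x, f x ∂ν := by
  simpa using integral_mono (integrable_const (1 : ℝ)) hf hf1

lemma abs_integral_mul_le (hf : Integrable f ν) (hψ : ∀ x, |ψ x| ≤ M) :
    |∫ x, f x * ψ x ∂ν| ≤ M * ∫ x, |f x| ∂ν := by
  rw [← integral_const_mul, ← Real.norm_eq_abs]
  refine norm_integral_le_of_norm_le (hf.abs.const_mul M) (ae_of_all _ fun x ↦ ?_)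
  rw [Real.norm_eq_abs, abs_mul, mul_comm]
  gcongr
  exact hψ x

lemma abs_integral_le_of_abs_le [IsProbabilityMeasure ν] (hψ : ∀ x, |ψ x| ≤ M) :
    |∫ x, ψ x ∂ν| ≤ M := by
  have h := norm_integral_le_of_norm_le_const (μ := ν) (f := ψ) (ae_of_all ν hψ)
  simpa using h

lemma abs_integral_mul_sub_mul_integral_le [IsProbabilityMeasure ν] (hf : Integrable f ν)
    (hψ : ∀ x, |ψ x| ≤ M) :
    |∫ x, f x * ψ x ∂ν - (∫ x, f x ∂ν) * ∫ x, ψ x ∂ν| ≤ 2 * M * ∫ x, |f x| ∂ν := by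
  have hprod : |(∫ x, f x ∂ν) * ∫ x, ψ x ∂ν| ≤ (∫ x, |f x| ∂ν) * M := by
    rw [abs_mul]
    exact mul_le_mul abs_integral_le_integral_abs (abs_integral_le_of_abs_le hψ) (abs_nonneg _)
      (integral_nonneg fun x ↦ abs_nonneg _)
  calc _ ≤ |∫ x, f x * ψ x ∂ν| + |(∫ x, f x ∂ν) * ∫ x, ψ x ∂ν| := abs_sub _ _
    _ ≤ M * ∫ x, |f x| ∂ν + (∫ x, |f x| ∂ν) * M := add_le_add (abs_integral_mul_le hf hψ) hprod
    _ = 2 * M * ∫ x, |f x| ∂ν := by ring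

lemma integral_add_const_mul_sub_mul_integral [IsProbabilityMeasure ν] (hf : Integrable f ν)
    (hψ : Integrable ψ ν) (hfψ : Integrable (fun x ↦ f x * ψ x) ν) (c : ℝ) :
    ∫ x, (f x + c) * ψ x ∂ν - (∫ x, (f x + c) ∂ν) * ∫ x, ψ x ∂ν =
      ∫ x, f x * ψ x ∂ν - (∫ x, f x ∂ν) * ∫ x, ψ x ∂ν := by
  simp only [add_mul]
  rw [integral_add hfψ (hψ.const_mul c), integral_add hf (integrable_const c),
    integral_const_mul, integral_const, probReal_univ, one_smul]
  ring

end Integrals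

section RealIntervals

variable {f : ℝ → ℝ} {a b c : ℝ}

lemma setIntegral_Ioo_eq_add (hf : IntegrableOn f (Ioo a c)) (hab : a ≤ b) (hbc : b ≤ c) :
    ∫ x in Ioo a c, f x = (∫ x in Ioo a b, f x) + ∫ x in Ioo b c, f x := by
  simp only [← integral_Ioc_eq_integral_Ioo, ← intervalIntegral.integral_of_le, hab, hbc,
    hab.trans hbc]
  refine (intervalIntegral.integral_add_adjacent_intervals ?_ ?_).symm
  · exact (intervalIntegrable_iff_integrableOn_Ioo_of_le hab).2
      (hf.mono_set (Ioo_subset_Ioo_right hbc))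
  · exact (intervalIntegrable_iff_integrableOn_Ioo_of_le hbc).2
      (hf.mono_set (Ioo_subset_Ioo_left hab))

lemma mul_le_setIntegral_of_antitoneOn (hf : IntegrableOn f (Ioo 0 1))
    (hanti : AntitoneOn f (Ioo 0 1)) {x : ℝ} (hx : x ∈ Ioo (0 : ℝ) 1) :
    x * f x ≤ ∫ y in Ioo 0 x, f y := by
  calc x * f x = ∫ _ in Ioo 0 x, f x := by
        simp [Real.volume_real_Ioo_of_le hx.1.le]
    _ ≤ ∫ y in Ioo 0 x, f y :=
        setIntegral_mono_on (by simp) (hf.mono_set (Ioo_subset_Ioo_right hx.2.le))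
          measurableSet_Ioo fun y hy ↦ hanti ⟨hy.1, hy.2.trans hx.2⟩ hx hy.2.le

end RealIntervals

/-! ### The transfer operator -/

/-- The Perron–Frobenius operator of one increasing full branch `g`: it sends a density `f` to the
density of the image under `g` of the measure `f dy`. Derivatives are junk-valued (zero) where `g`
is not differentiable, so the operator is meaningful on sets where `deriv g` is positive. -/
noncomputable def branchTransfer (g : ℝ ≃o ℝ) : (ℝ → ℝ) →ₗ[ℝ] ℝ → ℝ where
  toFun f x := f (g.symm x) / deriv g (g.symm x)
  map_add' _ _ := funext fun _ ↦ add_div _ _ _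
  map_smul' _ _ := funext fun _ ↦ mul_div_assoc _ _ _

section BranchTransfer

variable {g : ℝ ≃o ℝ} {f ψ : ℝ → ℝ} {s : Set ℝ}

lemma branchTransfer_apply (x : ℝ) :
    branchTransfer g f x = f (g.symm x) / deriv g (g.symm x) := rfl

lemma branchTransfer_apply_apply (y : ℝ) : branchTransfer g f (g y) = f y / deriv g y := by
  rw [branchTransfer_apply, g.symm_apply_apply]

lemma branchTransfer_nonneg (hf : ∀ y ∈ s, 0 ≤ f y) {x : ℝ} (hx : x ∈ g '' s) :
    0 ≤ branchTransfer g f x := by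
  obtain ⟨y, hy, rfl⟩ := hx
  rw [branchTransfer_apply_apply]
  exact div_nonneg (hf y hy) g.monotone.deriv_nonneg

lemma hasDerivWithinAt_of_deriv_pos (hg : ∀ y ∈ s, 0 < deriv g y) :
    ∀ y ∈ s, HasDerivWithinAt g (deriv g y) s y := fun y hy ↦
  (differentiableAt_of_deriv_ne_zero (hg y hy).ne').hasDerivAt.hasDerivWithinAt

lemma setIntegral_branchTransfer_mul (hs : MeasurableSet s) (hg : ∀ y ∈ s, 0 < deriv g y) :
    ∫ x in g '' s, branchTransfer g f x * ψ x = ∫ y in s, f y * ψ (g y) := by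
  rw [integral_image_eq_integral_abs_deriv_smul hs (hasDerivWithinAt_of_deriv_pos hg)
    g.injective.injOn]
  refine setIntegral_congr_fun hs fun y hy ↦ ?_
  have := hg y hy
  simp only [branchTransfer_apply_apply, abs_of_pos this, smul_eq_mul]
  field_simp

lemma integrableOn_branchTransfer (hs : MeasurableSet s) (hg : ∀ y ∈ s, 0 < deriv g y) :
    IntegrableOn (branchTransfer g f) (g '' s) ↔ IntegrableOn f s := by
  rw [integrableOn_image_iff_integrableOn_abs_deriv_smul hs (hasDerivWithinAt_of_deriv_pos hg)
    g.injective.injOn]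
  refine integrableOn_congr_fun (fun y hy ↦ ?_) hs
  have := hg y hy
  simp only [branchTransfer_apply_apply, abs_of_pos this, smul_eq_mul]
  field_simp

end BranchTransfer

section Branches

variable {z : ℝ} (hz : 0 < z)

/-- The left branch of `lsv z`, extended by the identity to an increasing bijection of the line. -/
noncomputable def leftBranch : ℝ ≃o ℝ :=
  have hmono : Monotone fun y : ℝ ↦ 2 ^ z * max y 0 ^ (1 + z) := fun a b hab ↦ by
    dsimp only
    gcongr
  have hcont : Continuous fun y : ℝ ↦ y + 2 ^ z * max y 0 ^ (1 + z) :=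
    continuous_id.add <| continuous_const.mul <|
      (continuous_id.max continuous_const).rpow_const fun _ ↦ Or.inr (by positivity)
  (strictMono_id.add_monotone hmono).orderIsoOfSurjective _ <| hcont.surjective
    (tendsto_atTop_mono (fun y ↦ le_add_of_nonneg_right (by positivity)) tendsto_id)
    (tendsto_id.congr' <| (eventually_le_atBot 0).mono fun y hy ↦ by
      simp [max_eq_right hy, Real.zero_rpow (by positivity : 1 + z ≠ 0)])

/-- The right branch of `lsv z`, extended to the line. -/
noncomputable def rightBranch : ℝ ≃o ℝ where
  toFun y := 2 * y - 1
  invFun x := (1 + x) / 2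
  left_inv y := by ring
  right_inv x := by ring
  map_rel_iff' := by simp

lemma leftBranch_apply {y : ℝ} (hy : 0 ≤ y) : leftBranch hz y = y * (1 + (2 * y) ^ z) := by
  change y + 2 ^ z * max y 0 ^ (1 + z) = _
  rw [max_eq_left hy, Real.rpow_one_add' hy (by positivity), Real.mul_rpow zero_le_two hy]
  ring

lemma rightBranch_apply (y : ℝ) : rightBranch y = 2 * y - 1 := rfl

lemma rightBranch_symm_apply (x : ℝ) : rightBranch.symm x = (1 + x) / 2 := rfl

lemma leftBranch_zero : leftBranch hz 0 = 0 := by simp [leftBranch_apply]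

lemma leftBranch_one_half : leftBranch hz (1 / 2) = 1 := by
  rw [leftBranch_apply hz (by norm_num)]
  norm_num

lemma leftBranch_image_Ioo : leftBranch hz '' Ioo 0 (1 / 2) = Ioo 0 1 := by
  rw [OrderIso.image_Ioo, leftBranch_zero, leftBranch_one_half]

lemma rightBranch_image_Ioo : rightBranch '' Ioo (1 / 2) 1 = Ioo 0 1 := by
  rw [OrderIso.image_Ioo, rightBranch_apply, rightBranch_apply]
  norm_num

lemma deriv_leftBranch {y : ℝ} (hy : 0 < y) :
    deriv (leftBranch hz) y = 1 + (1 + z) * (2 * y) ^ z := by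
  have hder : HasDerivAt (fun y : ℝ ↦ y + 2 ^ z * y ^ (1 + z))
      (1 + 2 ^ z * ((1 + z) * y ^ (1 + z - 1))) y :=
    (hasDerivAt_id y).add <| (Real.hasDerivAt_rpow_const (Or.inl hy.ne')).const_mul _
  have heq : leftBranch hz =ᶠ[𝓝 y] fun y ↦ y + 2 ^ z * y ^ (1 + z) := by
    filter_upwards [lt_mem_nhds hy] with t ht
    change t + 2 ^ z * max t 0 ^ (1 + z) = _
    rw [max_eq_left ht.le]
  rw [heq.deriv_eq, hder.deriv, add_sub_cancel_left, Real.mul_rpow zero_le_two hy.le]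
  ring

lemma deriv_rightBranch (y : ℝ) : deriv rightBranch y = 2 := by
  have hder : HasDerivAt (fun y : ℝ ↦ 2 * y - 1) (2 * 1) y :=
    ((hasDerivAt_id y).const_mul 2).sub_const 1
  exact hder.deriv.trans (mul_one 2)

lemma deriv_leftBranch_pos {y : ℝ} (hy : 0 < y) : 0 < deriv (leftBranch hz) y := by
  rw [deriv_leftBranch hz hy]
  positivity

lemma deriv_rightBranch_pos (y : ℝ) : 0 < deriv rightBranch y := by
  rw [deriv_rightBranch]
  exact two_pos

lemma lsv_eq_leftBranch {y : ℝ} (hy : y ∈ Ioo (0 : ℝ) (1 / 2)) : lsv z y = leftBranch hz y := by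
  rw [lsv, if_pos hy.2, leftBranch_apply hz hy.1.le, Real.mul_rpow zero_le_two hy.1.le]

lemma lsv_eq_rightBranch {y : ℝ} (hy : y ∈ Ioo (1 / 2 : ℝ) 1) : lsv z y = rightBranch y :=
  if_neg hy.1.not_gt

lemma measurable_lsv : Measurable (lsv z) :=
  Measurable.ite measurableSet_Iio (by fun_prop) (by fun_prop)

end Branches

section Transfer

variable {z : ℝ} (hz : 0 < z) {f g ψ : ℝ → ℝ} {M : ℝ}

/-- The transfer operator of `lsv z` with respect to Lebesgue measure on `(0, 1)`. -/
noncomputable def transfer : (ℝ → ℝ) →ₗ[ℝ] ℝ → ℝ :=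
  branchTransfer (leftBranch hz) + branchTransfer rightBranch

lemma transfer_apply (f : ℝ → ℝ) :
    transfer hz f = branchTransfer (leftBranch hz) f + branchTransfer rightBranch f := rfl

lemma transfer_pow_succ_apply (n : ℕ) (f : ℝ → ℝ) :
    (transfer hz ^ (n + 1)) f = transfer hz ((transfer hz ^ n) f) := by
  rw [pow_succ', Module.End.mul_apply]

lemma branchTransfer_leftBranch_nonneg (hf : ∀ x ∈ Ioo (0 : ℝ) 1, 0 ≤ f x) :
    ∀ x ∈ Ioo (0 : ℝ) 1, 0 ≤ branchTransfer (leftBranch hz) f x := fun x hx ↦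
  branchTransfer_nonneg (fun y hy ↦ hf y ⟨hy.1, hy.2.trans (by norm_num)⟩)
    ((leftBranch_image_Ioo hz).symm ▸ hx)

lemma branchTransfer_rightBranch_nonneg (hf : ∀ x ∈ Ioo (0 : ℝ) 1, 0 ≤ f x) :
    ∀ x ∈ Ioo (0 : ℝ) 1, 0 ≤ branchTransfer rightBranch f x := fun x hx ↦
  branchTransfer_nonneg (fun y hy ↦ hf y ⟨by linarith [hy.1], hy.2⟩)
    (rightBranch_image_Ioo.symm ▸ hx)

lemma transfer_pow_nonneg (n : ℕ) (hf : ∀ x ∈ Ioo (0 : ℝ) 1, 0 ≤ f x) :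
    ∀ x ∈ Ioo (0 : ℝ) 1, 0 ≤ (transfer hz ^ n) f x := by
  induction n with
  | zero => exact hf
  | succ n ih =>
    rw [transfer_pow_succ_apply]
    exact fun x hx ↦ add_nonneg (branchTransfer_leftBranch_nonneg hz ih x hx)
      (branchTransfer_rightBranch_nonneg ih x hx)

lemma transfer_pow_mono (n : ℕ) (hfg : ∀ x ∈ Ioo (0 : ℝ) 1, f x ≤ g x) :
    ∀ x ∈ Ioo (0 : ℝ) 1, (transfer hz ^ n) f x ≤ (transfer hz ^ n) g x := fun x hx ↦ by
  have h := transfer_pow_nonneg hz n (f := g - f) (fun y hy ↦ sub_nonneg.2 (hfg y hy)) x hx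
  rwa [map_sub, Pi.sub_apply, sub_nonneg] at h

lemma integrableOn_branchTransfer_leftBranch (hf : IntegrableOn f (Ioo 0 1)) :
    IntegrableOn (branchTransfer (leftBranch hz) f) (Ioo 0 1) := by
  rw [← leftBranch_image_Ioo hz, integrableOn_branchTransfer measurableSet_Ioo
    fun y hy ↦ deriv_leftBranch_pos hz hy.1]
  exact hf.mono_set (Ioo_subset_Ioo_right (by norm_num))

lemma integrableOn_branchTransfer_rightBranch (hf : IntegrableOn f (Ioo 0 1)) :
    IntegrableOn (branchTransfer rightBranch f) (Ioo 0 1) := by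
  rw [← rightBranch_image_Ioo, integrableOn_branchTransfer measurableSet_Ioo
    fun y _ ↦ deriv_rightBranch_pos y]
  exact hf.mono_set (Ioo_subset_Ioo_left (by norm_num))

lemma integrableOn_transfer_pow (n : ℕ) (hf : IntegrableOn f (Ioo 0 1)) :
    IntegrableOn ((transfer hz ^ n) f) (Ioo 0 1) := by
  induction n with
  | zero => exact hf
  | succ n ih =>
    rw [transfer_pow_succ_apply]
    exact (integrableOn_branchTransfer_leftBranch hz ih).add
      (integrableOn_branchTransfer_rightBranch ih)

lemma setIntegral_transfer_mul (hf : IntegrableOn f (Ioo 0 1)) (hψ : Measurable ψ)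
    (hψM : ∀ x, |ψ x| ≤ M) :
    ∫ x in Ioo 0 1, transfer hz f x * ψ x = ∫ x in Ioo 0 1, f x * ψ (lsv z x) := by
  have hleft : ∫ x in Ioo 0 1, branchTransfer (leftBranch hz) f x * ψ x =
      ∫ y in Ioo 0 (1 / 2), f y * ψ (lsv z y) := by
    rw [← leftBranch_image_Ioo hz, setIntegral_branchTransfer_mul measurableSet_Ioo
      fun y hy ↦ deriv_leftBranch_pos hz hy.1]
    exact setIntegral_congr_fun measurableSet_Ioo fun y hy ↦ by
      simp only [lsv_eq_leftBranch hz hy]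
  have hright : ∫ x in Ioo 0 1, branchTransfer rightBranch f x * ψ x =
      ∫ y in Ioo (1 / 2) 1, f y * ψ (lsv z y) := by
    rw [← rightBranch_image_Ioo, setIntegral_branchTransfer_mul measurableSet_Ioo
      fun y _ ↦ deriv_rightBranch_pos y]
    exact setIntegral_congr_fun measurableSet_Ioo fun y hy ↦ by
      simp only [lsv_eq_rightBranch hy]
  have h_int : IntegrableOn (fun x ↦ f x * ψ (lsv z x)) (Ioo 0 1) :=
    integrable_mul_of_abs_le hf (hψ.comp measurable_lsv) fun x ↦ hψM _
  rw [setIntegral_Ioo_eq_add (b := 1 / 2) h_int (by norm_num) (by norm_num), ← hleft, ← hright,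
    ← integral_add (integrable_mul_of_abs_le (integrableOn_branchTransfer_leftBranch hz hf) hψ hψM)
      (integrable_mul_of_abs_le (integrableOn_branchTransfer_rightBranch hf) hψ hψM)]
  simp only [transfer_apply, Pi.add_apply, add_mul]

lemma setIntegral_transfer_pow_mul (n : ℕ) (hf : IntegrableOn f (Ioo 0 1)) (hψ : Measurable ψ)
    (hψM : ∀ x, |ψ x| ≤ M) :
    ∫ x in Ioo 0 1, (transfer hz ^ n) f x * ψ x = ∫ x in Ioo 0 1, f x * ψ ((lsv z)^[n] x) := by
  induction n generalizing ψ with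
  | zero => rfl
  | succ n ih =>
    rw [transfer_pow_succ_apply, setIntegral_transfer_mul hz (integrableOn_transfer_pow hz n hf)
      hψ hψM, ih (ψ := fun x ↦ ψ (lsv z x)) (hψ.comp measurable_lsv) fun x ↦ hψM _]
    simp only [Function.iterate_succ_apply']

lemma setIntegral_transfer_pow (n : ℕ) (hf : IntegrableOn f (Ioo 0 1)) :
    ∫ x in Ioo 0 1, (transfer hz ^ n) f x = ∫ x in Ioo 0 1, f x := by
  simpa using setIntegral_transfer_pow_mul hz (ψ := fun _ ↦ 1) (M := 1) n hf measurable_const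
    (by simp)

end Transfer

/-! ### Distortion -/

/-- The distortion factor `exp (R (log (b / a)) ^ r)` allowed between the values of a function at
`a ≤ b`; the ratio `b / a` is used since it is not expanded by the inverse of the left branch. -/
noncomputable def distortion (r R a b : ℝ) : ℝ := Real.exp (R * Real.log (b / a) ^ r)

/-- Up to a distortion factor, the nonnegative function `f` is antitone and `x ↦ x ^ 2 * f x` is
monotone on `s`. The exponent `r` plays the role of a Hölder exponent for `log ∘ f ∘ exp`. -/
structure HasDistortionOn (r R : ℝ) (f : ℝ → ℝ) (s : Set ℝ) : Prop where
  nonneg : ∀ x ∈ s, 0 ≤ f x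
  le_mul : ∀ a ∈ s, ∀ b ∈ s, a ≤ b → f b ≤ f a * distortion r R a b
  sq_mul_le : ∀ a ∈ s, ∀ b ∈ s, a ≤ b → a ^ 2 * f a ≤ b ^ 2 * f b * distortion r R a b

section Distortion

variable {z r R R' a b c d : ℝ} {f g : ℝ → ℝ} {s t : Set ℝ}

lemma log_div_nonneg (ha : 0 < a) (hab : a ≤ b) : 0 ≤ Real.log (b / a) :=
  Real.log_nonneg ((one_le_div ha).2 hab)

lemma distortion_pos : 0 < distortion r R a b := Real.exp_pos _

lemma distortion_zero : distortion r 0 a b = 1 := by simp [distortion]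

lemma distortion_mono (hR : R ≤ R') (ha : 0 < a) (hab : a ≤ b) :
    distortion r R a b ≤ distortion r R' a b := by
  have := log_div_nonneg ha hab
  unfold distortion
  gcongr

lemma distortion_mul : distortion r R a b * distortion r R' a b = distortion r (R + R') a b := by
  rw [distortion, distortion, distortion, ← Real.exp_add, add_mul]

lemma distortion_le_of_log_le {q : ℝ} (hr : 0 ≤ r) (hR : 0 ≤ R) (hq : 0 < q) (ha : 0 < a)
    (hab : a ≤ b) (hlog : Real.log (b / a) ≤ q * Real.log (d / c)) :
    distortion r R a b ≤ distortion r (R * q ^ r) c d := by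
  have hab' := log_div_nonneg ha hab
  have hcd : 0 ≤ Real.log (d / c) := nonneg_of_mul_nonneg_right (hab'.trans hlog) hq
  unfold distortion
  rw [mul_assoc, ← Real.mul_rpow hq.le hcd]
  gcongr

namespace HasDistortionOn

lemma of_antitoneOn (hf : ∀ x ∈ s, 0 ≤ f x) (hanti : AntitoneOn f s)
    (hmono : MonotoneOn (fun x ↦ x ^ 2 * f x) s) : HasDistortionOn r 0 f s where
  nonneg := hf
  le_mul a ha b hb hab := by simpa [distortion_zero] using hanti ha hb hab
  sq_mul_le a ha b hb hab := by simpa [distortion_zero] using hmono ha hb hab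

lemma antitoneOn (h : HasDistortionOn r 0 f s) : AntitoneOn f s := fun a ha b hb hab ↦ by
  simpa [distortion_zero] using h.le_mul a ha b hb hab

lemma monotoneOn_sq_mul (h : HasDistortionOn r 0 f s) : MonotoneOn (fun x ↦ x ^ 2 * f x) s :=
  fun a ha b hb hab ↦ by simpa [distortion_zero] using h.sq_mul_le a ha b hb hab

lemma mono_set (h : HasDistortionOn r R f t) (hst : s ⊆ t) : HasDistortionOn r R f s where
  nonneg x hx := h.nonneg x (hst hx)
  le_mul a ha b hb := h.le_mul a (hst ha) b (hst hb)
  sq_mul_le a ha b hb := h.sq_mul_le a (hst ha) b (hst hb)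

lemma mono_const (h : HasDistortionOn r R f s) (hs : s ⊆ Ioi 0) (hR : R ≤ R') :
    HasDistortionOn r R' f s where
  nonneg := h.nonneg
  le_mul a ha b hb hab := (h.le_mul a ha b hb hab).trans <|
    mul_le_mul_of_nonneg_left (distortion_mono hR (hs ha) hab) (h.nonneg a ha)
  sq_mul_le a ha b hb hab := (h.sq_mul_le a ha b hb hab).trans <|
    mul_le_mul_of_nonneg_left (distortion_mono hR (hs ha) hab)
      (mul_nonneg (sq_nonneg b) (h.nonneg b hb))

lemma congr (h : HasDistortionOn r R f s) (hgf : EqOn g f s) : HasDistortionOn r R g s where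
  nonneg x hx := (h.nonneg x hx).trans_eq (hgf hx).symm
  le_mul a ha b hb hab := by simpa only [hgf ha, hgf hb] using h.le_mul a ha b hb hab
  sq_mul_le a ha b hb hab := by simpa only [hgf ha, hgf hb] using h.sq_mul_le a ha b hb hab

lemma add (hf : HasDistortionOn r R f s) (hg : HasDistortionOn r R g s) :
    HasDistortionOn r R (f + g) s where
  nonneg x hx := add_nonneg (hf.nonneg x hx) (hg.nonneg x hx)
  le_mul a ha b hb hab := by
    simpa only [Pi.add_apply, add_mul] using
      add_le_add (hf.le_mul a ha b hb hab) (hg.le_mul a ha b hb hab)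
  sq_mul_le a ha b hb hab := by
    simpa only [Pi.add_apply, add_mul, mul_add] using
      add_le_add (hf.sq_mul_le a ha b hb hab) (hg.sq_mul_le a ha b hb hab)

lemma mul (hf : HasDistortionOn r R f s) (hg : ∀ x ∈ s, 0 ≤ g x)
    (hg_le : ∀ a ∈ s, ∀ b ∈ s, a ≤ b → g b ≤ g a * distortion r R' a b)
    (hg_ge : ∀ a ∈ s, ∀ b ∈ s, a ≤ b → g a ≤ g b * distortion r R' a b) :
    HasDistortionOn r (R + R') (fun x ↦ g x * f x) s where
  nonneg x hx := mul_nonneg (hg x hx) (hf.nonneg x hx)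
  le_mul a ha b hb hab := calc
    g b * f b ≤ (g a * distortion r R' a b) * (f a * distortion r R a b) :=
      mul_le_mul (hg_le a ha b hb hab) (hf.le_mul a ha b hb hab) (hf.nonneg b hb)
        (mul_nonneg (hg a ha) distortion_pos.le)
    _ = g a * f a * distortion r (R + R') a b := by rw [← distortion_mul]; ring
  sq_mul_le a ha b hb hab := calc
    a ^ 2 * (g a * f a) = g a * (a ^ 2 * f a) := by ring
    _ ≤ (g b * distortion r R' a b) * (b ^ 2 * f b * distortion r R a b) :=
      mul_le_mul (hg_ge a ha b hb hab) (hf.sq_mul_le a ha b hb hab)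
        (mul_nonneg (sq_nonneg a) (hf.nonneg a ha)) (mul_nonneg (hg b hb) distortion_pos.le)
    _ = b ^ 2 * (g b * f b) * distortion r (R + R') a b := by rw [← distortion_mul]; ring

lemma const_mul (hf : HasDistortionOn r R f s) (hc : 0 ≤ c) :
    HasDistortionOn r R (fun x ↦ c * f x) s := by
  simpa [distortion_zero, hc] using hf.mul (R' := 0) (g := fun _ ↦ c)

lemma branchTransfer {g : ℝ ≃o ℝ} {q : ℝ} (h : HasDistortionOn r R f s) (hr : 0 ≤ r) (hR : 0 ≤ R)
    (hq : 0 < q) (hs : s ⊆ Ioi 0) (hg : ∀ y ∈ s, 0 < deriv g y) (hg_mono : MonotoneOn (deriv g) s)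
    (hg_sq : MonotoneOn (fun y ↦ g y ^ 2 / (y ^ 2 * deriv g y)) s)
    (hlog : ∀ a ∈ s, ∀ b ∈ s, a ≤ b → Real.log (b / a) ≤ q * Real.log (g b / g a)) :
    HasDistortionOn r (R * q ^ r) (LSV.branchTransfer g f) (g '' s) where
  nonneg x := branchTransfer_nonneg h.nonneg
  le_mul := by
    rintro _ ⟨a, ha, rfl⟩ _ ⟨b, hb, rfl⟩ hab
    have hab := g.le_iff_le.1 hab
    rw [branchTransfer_apply_apply, branchTransfer_apply_apply, div_mul_eq_mul_div]
    have hfb : f b ≤ f a * distortion r (R * q ^ r) (g a) (g b) :=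
      (h.le_mul a ha b hb hab).trans <| mul_le_mul_of_nonneg_left
        (distortion_le_of_log_le hr hR hq (hs ha) hab (hlog a ha b hb hab)) (h.nonneg a ha)
    exact div_le_div₀ ((h.nonneg b hb).trans hfb) hfb (hg a ha) (hg_mono ha hb hab)
  sq_mul_le := by
    rintro _ ⟨a, ha, rfl⟩ _ ⟨b, hb, rfl⟩ hab
    have hab := g.le_iff_le.1 hab
    have hfa : a ^ 2 * f a ≤ b ^ 2 * f b * distortion r (R * q ^ r) (g a) (g b) :=
      (h.sq_mul_le a ha b hb hab).trans <| mul_le_mul_of_nonneg_left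
        (distortion_le_of_log_le hr hR hq (hs ha) hab (hlog a ha b hb hab))
        (mul_nonneg (sq_nonneg b) (h.nonneg b hb))
    have ha0 : a ≠ 0 := (hs ha).ne'
    have hb0 : b ≠ 0 := (hs hb).ne'
    calc g a ^ 2 * LSV.branchTransfer g f (g a)
        = a ^ 2 * f a * (g a ^ 2 / (a ^ 2 * deriv g a)) := by
          rw [branchTransfer_apply_apply]; field_simp
      _ ≤ b ^ 2 * f b * distortion r (R * q ^ r) (g a) (g b) * (g b ^ 2 / (b ^ 2 * deriv g b)) :=
          mul_le_mul hfa (hg_sq ha hb hab)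
            (div_nonneg (sq_nonneg _) (mul_nonneg (sq_nonneg a) (hg a ha).le))
            (mul_nonneg (mul_nonneg (sq_nonneg b) (h.nonneg b hb)) distortion_pos.le)
      _ = g b ^ 2 * LSV.branchTransfer g f (g b) * distortion r (R * q ^ r) (g a) (g b) := by
          rw [branchTransfer_apply_apply]; field_simp

end HasDistortionOn

section Branches

variable (hz : 0 < z)

lemma monotoneOn_deriv_leftBranch : MonotoneOn (deriv (leftBranch hz)) (Ioi 0) :=
  fun a (ha : 0 < a) b (hb : 0 < b) hab ↦ by
    rw [deriv_leftBranch hz ha, deriv_leftBranch hz hb]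
    gcongr

lemma monotoneOn_sq_div_leftBranch (hz1 : z ≤ 1) :
    MonotoneOn (fun y ↦ leftBranch hz y ^ 2 / (y ^ 2 * deriv (leftBranch hz) y)) (Ioi 0) := by
  intro a (ha : 0 < a) b (hb : 0 < b) hab
  have hw : (2 * a) ^ z ≤ (2 * b) ^ z := by gcongr
  have hwa : 0 < (2 * a) ^ z := by positivity
  have hwb : 0 < (2 * b) ^ z := by positivity
  simp only [leftBranch_apply hz ha.le, leftBranch_apply hz hb.le, deriv_leftBranch hz ha,
    deriv_leftBranch hz hb, mul_pow _ (_ + _), mul_div_mul_left _ _ (pow_ne_zero 2 ha.ne'),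
    mul_div_mul_left _ _ (pow_ne_zero 2 hb.ne')]
  rw [div_le_div_iff₀ (by positivity) (by positivity)]
  generalize (2 * a) ^ z = v at *
  generalize (2 * b) ^ z = w at *
  have hfactor : 0 ≤ (w - v) * ((1 - z) + (w + v) + (1 + z) * w * v) :=
    mul_nonneg (sub_nonneg.2 hw) (add_nonneg (by linarith) (by positivity))
  linarith

lemma log_div_le_log_leftBranch_div (ha : 0 < a) (hab : a ≤ b) :
    Real.log (b / a) ≤ Real.log (leftBranch hz b / leftBranch hz a) := by
  have hb := ha.trans_le hab
  rw [leftBranch_apply hz ha.le, leftBranch_apply hz hb.le]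
  refine Real.log_le_log (by positivity) ?_
  rw [div_le_div_iff₀ ha (by positivity)]
  have hw : (2 * a) ^ z ≤ (2 * b) ^ z := by gcongr
  calc b * (a * (1 + (2 * a) ^ z)) ≤ b * (a * (1 + (2 * b) ^ z)) := by gcongr
    _ = b * (1 + (2 * b) ^ z) * a := by ring

lemma monotoneOn_sq_div_rightBranch :
    MonotoneOn (fun y ↦ rightBranch y ^ 2 / (y ^ 2 * deriv rightBranch y)) (Ici (1 / 2)) := by
  intro a (ha : 1 / 2 ≤ a) b (hb : 1 / 2 ≤ b) hab
  simp only [deriv_rightBranch, rightBranch_apply]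
  rw [div_le_div_iff₀ (by positivity) (by positivity)]
  have hcross : (2 * a - 1) * b ≤ (2 * b - 1) * a := by linarith
  have hsq := pow_le_pow_left₀ (by nlinarith) hcross 2
  rw [mul_pow, mul_pow] at hsq
  linarith

lemma log_div_le_half_log_rightBranch_div (ha : 1 / 2 < a) (hab : a ≤ b) (hb : b ≤ 1) :
    Real.log (b / a) ≤ 1 / 2 * Real.log (rightBranch b / rightBranch a) := by
  have ha0 : 0 < a := by linarith
  have hb0 : 0 < b := by linarith
  have hsq : Real.log ((b / a) ^ 2) ≤ Real.log (rightBranch b / rightBranch a) := by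
    refine Real.log_le_log (by positivity) ?_
    rw [rightBranch_apply, rightBranch_apply, div_pow, div_le_div_iff₀ (by positivity)
      (by linarith)]
    have hfactor : 0 ≤ (b - a) * (a * (1 - b) + b * (1 - a)) :=
      mul_nonneg (sub_nonneg.2 hab) (add_nonneg (mul_nonneg ha0.le (by linarith))
        (mul_nonneg hb0.le (by linarith)))
    linarith
  rw [Real.log_pow] at hsq
  push_cast at hsq
  linarith

namespace HasDistortionOn

lemma branchTransfer_leftBranch (hz1 : z ≤ 1) (hr : 0 ≤ r) (hR : 0 ≤ R)
    (h : HasDistortionOn r R f (Ioo 0 (1 / 2))) :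
    HasDistortionOn r R (LSV.branchTransfer (leftBranch hz) f) (Ioo 0 1) := by
  have hs : Ioo (0 : ℝ) (1 / 2) ⊆ Ioi 0 := Ioo_subset_Ioi_self
  rw [← leftBranch_image_Ioo hz]
  simpa only [Real.one_rpow, mul_one] using h.branchTransfer hr hR one_pos hs
    (fun y hy ↦ deriv_leftBranch_pos hz hy.1) ((monotoneOn_deriv_leftBranch hz).mono hs)
    ((monotoneOn_sq_div_leftBranch hz hz1).mono hs)
    fun a ha b _ hab ↦ (log_div_le_log_leftBranch_div hz ha.1 hab).trans_eq (one_mul _).symm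

lemma branchTransfer_rightBranch (hr : 0 ≤ r) (hR : 0 ≤ R)
    (h : HasDistortionOn r R f (Ioo (1 / 2) 1)) :
    HasDistortionOn r (R * (1 / 2) ^ r) (LSV.branchTransfer rightBranch f) (Ioo 0 1) := by
  have hs : Ioo (1 / 2 : ℝ) 1 ⊆ Ioi 0 := fun y hy ↦ one_half_pos.trans hy.1
  rw [← rightBranch_image_Ioo]
  exact h.branchTransfer hr hR one_half_pos hs (fun y _ ↦ deriv_rightBranch_pos y)
    (fun a _ b _ _ ↦ by simp only [deriv_rightBranch, le_refl])
    (monotoneOn_sq_div_rightBranch.mono fun y hy ↦ hy.1.le)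
    fun a ha b hb hab ↦ log_div_le_half_log_rightBranch_div ha.1 hab hb.2.le

lemma transfer (hz1 : z ≤ 1) (hr : 0 ≤ r) (hR : 0 ≤ R)
    (hleft : HasDistortionOn r (R * (1 / 2) ^ r) f (Ioo 0 (1 / 2)))
    (hright : HasDistortionOn r R f (Ioo (1 / 2) 1)) :
    HasDistortionOn r (R * (1 / 2) ^ r) (LSV.transfer hz f) (Ioo 0 1) :=
  (hleft.branchTransfer_leftBranch hz hz1 hr (by positivity)).add
    (hright.branchTransfer_rightBranch hr hR)

end HasDistortionOn

end Branches

/-! ### Distortion on the right half of the interval -/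

section RightHalf

lemma log_div_mem_Icc_of_mem_Ico (ha : a ∈ Ico (1 / 2 : ℝ) 1) (hb : b ∈ Ico (1 / 2 : ℝ) 1)
    (hab : a ≤ b) : Real.log (b / a) ∈ Icc (0 : ℝ) 1 := by
  have ha0 : 0 < a := one_half_pos.trans_le ha.1
  refine ⟨log_div_nonneg ha0 hab, ?_⟩
  have hdiv : b / a ≤ 2 := by
    rw [div_le_iff₀ ha0]
    linarith [ha.1, hb.2]
  linarith [Real.log_le_sub_one_of_pos (div_pos (ha0.trans_le hab) ha0)]

lemma distortion_le_exp_of_mem_Ico (hr : 0 ≤ r) (hR : 0 ≤ R) (ha : a ∈ Ico (1 / 2 : ℝ) 1)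
    (hb : b ∈ Ico (1 / 2 : ℝ) 1) (hab : a ≤ b) : distortion r R a b ≤ Real.exp R := by
  obtain ⟨h0, h1⟩ := log_div_mem_Icc_of_mem_Ico ha hb hab
  exact Real.exp_le_exp.2 (mul_le_of_le_one_right hR (Real.rpow_le_one h0 h1 hr))

lemma exp_sub_exp_le (u v : ℝ) : Real.exp u - Real.exp v ≤ (u - v) * Real.exp u := by
  have h := mul_le_mul_of_nonneg_right (Real.add_one_le_exp (v - u)) (Real.exp_pos u).le
  rw [← Real.exp_add, sub_add_cancel] at h
  linarith

lemma le_exp_sub_exp {u v : ℝ} (hv : 0 ≤ v) (huv : v ≤ u) : u - v ≤ Real.exp u - Real.exp v := by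
  have h : Real.exp v - Real.exp u ≤ (v - u) * Real.exp v := exp_sub_exp_le v u
  nlinarith [Real.one_le_exp hv]

lemma mul_exp_sub_exp_le {v : ℝ} (hR' : 0 ≤ R') (hR : R' < R) (hc : 0 ≤ c)
    (hv : (R + 2) * Real.exp R * c ≤ (R - R') * v) (hd : d ∈ Icc (0 : ℝ) 1) :
    c * (Real.exp (R * d) - Real.exp (-2 * d)) ≤ v * (Real.exp (R * d) - Real.exp (R' * d)) := by
  have hR0 : 0 < R := hR'.trans_lt hR
  have hsub : 0 < R - R' := sub_pos.2 hR
  have hd0 := hd.1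
  have hv0 : 0 ≤ v := nonneg_of_mul_nonneg_right (hv.trans' (by positivity)) hsub
  have hRd : R * d ≤ R := mul_le_of_le_one_right hR0.le hd.2
  calc c * (Real.exp (R * d) - Real.exp (-2 * d))
      ≤ c * ((R * d - -2 * d) * Real.exp (R * d)) :=
        mul_le_mul_of_nonneg_left (exp_sub_exp_le _ _) hc
    _ = c * ((R + 2) * d * Real.exp (R * d)) := by ring
    _ ≤ c * ((R + 2) * d * Real.exp R) := by gcongr
    _ = (R + 2) * Real.exp R * c * d := by ring
    _ ≤ (R - R') * v * d := by gcongr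
    _ = v * (R * d - R' * d) := by ring
    _ ≤ v * (Real.exp (R * d) - Real.exp (R' * d)) :=
        mul_le_mul_of_nonneg_left
          (le_exp_sub_exp (mul_nonneg hR' hd0) (mul_le_mul_of_nonneg_right hR.le hd0)) hv0

lemma sq_mul_exp_le (hr1 : r ≤ 1) (ha : a ∈ Ico (1 / 2 : ℝ) 1) (hb : b ∈ Ico (1 / 2 : ℝ) 1)
    (hab : a ≤ b) : b ^ 2 * Real.exp (-2 * Real.log (b / a) ^ r) ≤ a ^ 2 := by
  have ha0 : 0 < a := one_half_pos.trans_le ha.1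
  have hb0 : 0 < b := one_half_pos.trans_le hb.1
  have hl := log_div_mem_Icc_of_mem_Ico ha hb hab
  have hle : Real.log (b / a) ≤ Real.log (b / a) ^ r := Real.self_le_rpow_of_le_one hl.1 hl.2 hr1
  calc b ^ 2 * Real.exp (-2 * Real.log (b / a) ^ r)
      ≤ b ^ 2 * Real.exp (-(Real.log (b / a) + Real.log (b / a))) := by gcongr; linarith
    _ = a ^ 2 := by
        rw [Real.exp_neg, Real.exp_add, Real.exp_log (by positivity)]
        field_simp

namespace HasDistortionOn

lemma sub_const (hr : 0 ≤ r) (hr1 : r ≤ 1) (hR' : 0 ≤ R') (hR : R' < R) (hc : 0 ≤ c)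
    (h : HasDistortionOn r R' f (Ico (1 / 2) 1))
    (hf : ∀ x ∈ Ico (1 / 2 : ℝ) 1, (R + 2) * Real.exp R * c ≤ (R - R') * f x) :
    HasDistortionOn r R (fun x ↦ f x - c) (Ico (1 / 2) 1) := by
  have hR0 : 0 < R := hR'.trans_lt hR
  have hpow : ∀ a ∈ Ico (1 / 2 : ℝ) 1, ∀ b ∈ Ico (1 / 2 : ℝ) 1, a ≤ b →
      Real.log (b / a) ^ r ∈ Icc (0 : ℝ) 1 := fun a ha b hb hab ↦
    have hl := log_div_mem_Icc_of_mem_Ico ha hb hab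
    ⟨Real.rpow_nonneg hl.1 r, Real.rpow_le_one hl.1 hl.2 hr⟩
  refine ⟨fun x hx ↦ ?_, fun a ha b hb hab ↦ ?_, fun a ha b hb hab ↦ ?_⟩
  · have hcoeff : R - R' ≤ (R + 2) * Real.exp R := by nlinarith [Real.one_le_exp hR0.le]
    have hle : (R - R') * c ≤ (R - R') * f x :=
      (mul_le_mul_of_nonneg_right hcoeff hc).trans (hf x hx)
    exact sub_nonneg.2 (le_of_mul_le_mul_left hle (sub_pos.2 hR))
  · have hd := hpow a ha b hb hab
    have hcore := mul_exp_sub_exp_le hR' hR hc (hf a ha) hd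
    have hle_one : Real.exp (-2 * Real.log (b / a) ^ r) ≤ 1 :=
      Real.exp_le_one_iff.2 (by linarith [hd.1])
    have hfb := h.le_mul a ha b hb hab
    unfold distortion at hfb ⊢
    nlinarith [mul_le_mul_of_nonneg_left hle_one hc]
  · have hcore := mul_exp_sub_exp_le hR' hR hc (hf b hb) (hpow a ha b hb hab)
    have hsq := sq_mul_exp_le hr1 ha hb hab
    have hfa := h.sq_mul_le a ha b hb hab
    unfold distortion at hfa ⊢
    nlinarith [mul_le_mul_of_nonneg_left hcore (sq_nonneg b), mul_le_mul_of_nonneg_left hsq hc]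

lemma le_four_mul_exp_mul (hr : 0 ≤ r) (hR : 0 ≤ R) (h : HasDistortionOn r R f (Ico (1 / 2) 1))
    {x y : ℝ} (hx : x ∈ Ico (1 / 2 : ℝ) 1) (hy : y ∈ Ico (1 / 2 : ℝ) 1) :
    f y ≤ 4 * Real.exp R * f x := by
  have hfx := h.nonneg x hx
  rcases le_total x y with hxy | hyx
  · have hfy : f y ≤ f x * Real.exp R := (h.le_mul x hx y hy hxy).trans <|
      mul_le_mul_of_nonneg_left (distortion_le_exp_of_mem_Ico hr hR hx hy hxy) hfx
    nlinarith [mul_nonneg hfx (Real.exp_pos R).le]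
  · have hx0 : 0 < x := one_half_pos.trans_le hx.1
    calc f y = 4 * ((1 / 2) ^ 2 * f y) := by ring
      _ ≤ 4 * (y ^ 2 * f y) := by gcongr; exacts [h.nonneg y hy, hy.1]
      _ ≤ 4 * (x ^ 2 * f x * Real.exp R) := by
        refine mul_le_mul_of_nonneg_left ?_ zero_le_four
        exact (h.sq_mul_le y hy x hx hyx).trans <| mul_le_mul_of_nonneg_left
          (distortion_le_exp_of_mem_Ico hr hR hy hx hyx) (by positivity)
      _ ≤ 4 * (1 ^ 2 * f x * Real.exp R) := by gcongr; exact hx.2.le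
      _ = 4 * Real.exp R * f x := by ring

lemma setIntegral_le (hr : 0 ≤ r) (hR : 0 ≤ R) (h : HasDistortionOn r R f (Ico (1 / 2) 1))
    (hf : IntegrableOn f (Ioo (1 / 2) 1)) {x : ℝ} (hx : x ∈ Ico (1 / 2 : ℝ) 1) :
    ∫ y in Ioo (1 / 2) 1, f y ≤ 2 * Real.exp R * f x := by
  calc ∫ y in Ioo (1 / 2) 1, f y ≤ ∫ _ in Ioo (1 / 2 : ℝ) 1, 4 * Real.exp R * f x :=
        setIntegral_mono_on hf (integrableOn_const (by simp)) measurableSet_Ioo fun y hy ↦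
          h.le_four_mul_exp_mul hr hR hx (Ioo_subset_Ico_self hy)
    _ = 2 * Real.exp R * f x := by
        rw [setIntegral_const, Real.volume_real_Ioo_of_le (by norm_num), smul_eq_mul]
        ring

end HasDistortionOn

end RightHalf

end Distortion

/-! ### Escape from the neutral fixed point -/

section NeutralFixedPoint

variable {z : ℝ} (hz : 0 < z) {y : ℝ}

include hz in
lemma two_mul_rpow_le_one (hy : y ∈ Ioc (0 : ℝ) (1 / 2)) : (2 * y) ^ z ≤ 1 :=
  Real.rpow_le_one (by linarith [hy.1]) (by linarith [hy.2]) hz.le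

include hz in
lemma rpow_le_two_mul_rpow (hy : 0 ≤ y) : y ^ z ≤ (2 * y) ^ z := by
  gcongr
  linarith

lemma leftBranch_rpow_le (hz1 : z ≤ 1) (hy : 0 < y) :
    leftBranch hz y ^ z ≤ y ^ z * (1 + z * (2 * y) ^ z) := by
  have hw : 0 < (2 * y) ^ z := by positivity
  rw [leftBranch_apply hz hy.le, Real.mul_rpow hy.le (by positivity)]
  gcongr
  exact rpow_one_add_le_one_add_mul_self (by linarith) hz.le hz1

lemma leftBranch_rpow_neg_add_le (hz1 : z ≤ 1) (hy : y ∈ Ioc (0 : ℝ) (1 / 2)) :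
    leftBranch hz y ^ (-z) + z / 2 ≤ y ^ (-z) := by
  have hy0 := hy.1
  have hw : 0 < (2 * y) ^ z := by positivity
  have hw1 := two_mul_rpow_le_one hz hy
  have hyw := rpow_le_two_mul_rpow hz hy.1.le
  rw [leftBranch_apply hz hy.1.le, Real.mul_rpow hy.1.le (by positivity), Real.rpow_neg hy.1.le]
  have hb : 0 < y ^ z := by positivity
  generalize (2 * y) ^ z = w at *
  generalize y ^ z = b at *
  have hbernoulli : (1 + w) ^ (-z) ≤ 1 - z * (w / (1 + w)) := calc
    (1 + w) ^ (-z) = (1 + -(w / (1 + w))) ^ z := by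
      rw [Real.rpow_neg (by positivity), ← Real.inv_rpow (by positivity)]
      congr 1
      field_simp
      ring
    _ ≤ 1 + z * -(w / (1 + w)) := rpow_one_add_le_one_add_mul_self
      (neg_le_neg ((div_le_one (by positivity)).2 (by linarith))) hz.le hz1
    _ = 1 - z * (w / (1 + w)) := by ring
  have hgain : z / 2 ≤ b⁻¹ * (z * (w / (1 + w))) := by
    rw [inv_mul_eq_div, mul_div_assoc', div_div, div_le_div_iff₀ two_pos (by positivity)]
    nlinarith [mul_le_mul hyw (by linarith : 1 + w ≤ 2) (by positivity) hw.le]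
  nlinarith [mul_le_mul_of_nonneg_left hbernoulli (inv_pos.2 hb).le]

/-- The preimages of `1` under the left branch, `1 = x₀ > x₁ = 1 / 2 > x₂ > ⋯`; the points of
`(xₙ₊₁, xₙ)` need `n` steps to reach the right half of the interval. -/
noncomputable def leftPreimage (n : ℕ) : ℝ := (leftBranch hz).symm^[n] 1

lemma leftPreimage_zero : leftPreimage hz 0 = 1 := rfl

lemma leftBranch_leftPreimage_succ (n : ℕ) :
    leftBranch hz (leftPreimage hz (n + 1)) = leftPreimage hz n := by
  rw [leftPreimage, Function.iterate_succ_apply', OrderIso.apply_symm_apply, leftPreimage]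

lemma leftPreimage_mem_Ioc (n : ℕ) : leftPreimage hz n ∈ Ioc (0 : ℝ) 1 := by
  induction n with
  | zero => simp [leftPreimage_zero]
  | succ n ih =>
    rw [← leftBranch_leftPreimage_succ, ← leftBranch_zero hz, ← leftBranch_one_half hz] at ih
    have h1 := (leftBranch hz).le_iff_le.1 ih.2
    exact ⟨(leftBranch hz).lt_iff_lt.1 ih.1, h1.trans (by norm_num)⟩

lemma leftPreimage_succ_mem_Ioc (n : ℕ) : leftPreimage hz (n + 1) ∈ Ioc (0 : ℝ) (1 / 2) := by
  refine ⟨(leftPreimage_mem_Ioc hz _).1, (leftBranch hz).le_iff_le.1 ?_⟩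
  rw [leftBranch_leftPreimage_succ, leftBranch_one_half]
  exact (leftPreimage_mem_Ioc hz n).2

lemma mul_le_leftPreimage_rpow_neg (hz1 : z ≤ 1) (n : ℕ) :
    z / 2 * n ≤ leftPreimage hz n ^ (-z) := by
  induction n with
  | zero => simp [leftPreimage_zero]
  | succ n ih =>
    have h := leftBranch_rpow_neg_add_le hz hz1 (leftPreimage_succ_mem_Ioc hz n)
    rw [leftBranch_leftPreimage_succ] at h
    push_cast
    linarith

lemma leftPreimage_rpow_le (hz1 : z ≤ 1) {n : ℕ} (hn : 1 ≤ n) :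
    leftPreimage hz n ^ (1 - z) ≤ (z / 2) ^ (-(1 / z - 1)) * (n : ℝ) ^ (-(1 / z - 1)) := by
  have hX := (leftPreimage_mem_Ioc hz n).1
  have hn0 : (0 : ℝ) < n := by exact_mod_cast hn
  calc leftPreimage hz n ^ (1 - z) = (leftPreimage hz n ^ (-z)) ^ (-(1 / z - 1)) := by
        rw [← Real.rpow_mul hX.le]
        congr 1
        field_simp
    _ ≤ (z / 2 * n) ^ (-(1 / z - 1)) :=
        Real.rpow_le_rpow_of_nonpos (by positivity) (mul_le_leftPreimage_rpow_neg hz hz1 n)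
          (by rw [neg_nonpos, sub_nonneg]; exact one_le_one_div hz hz1)
    _ = _ := Real.mul_rpow (by positivity) hn0.le

end NeutralFixedPoint

/-! ### The densities of the images of Lebesgue measure -/

lemma setIntegral_Ioo_le_of_le_rpow {z E a : ℝ} {f : ℝ → ℝ} (hz1 : z < 1) (ha : 0 ≤ a)
    (hf : IntegrableOn f (Ioo 0 a)) (hE : ∀ x ∈ Ioo 0 a, f x ≤ E * x ^ (-z)) :
    ∫ x in Ioo 0 a, f x ≤ E * (a ^ (1 - z) / (1 - z)) := by
  have h_int : IntegrableOn (fun x : ℝ ↦ x ^ (-z)) (Ioo 0 a) :=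
    (intervalIntegrable_iff_integrableOn_Ioo_of_le ha).1
      (intervalIntegral.intervalIntegrable_rpow' (by linarith))
  calc ∫ x in Ioo 0 a, f x ≤ ∫ x in Ioo 0 a, E * x ^ (-z) :=
        setIntegral_mono_on hf (h_int.const_mul E) measurableSet_Ioo hE
    _ = E * (a ^ (1 - z) / (1 - z)) := by
        rw [integral_const_mul, ← integral_Ioc_eq_integral_Ioo,
          ← intervalIntegral.integral_of_le ha, integral_rpow (Or.inl (by linarith)),
          neg_add_eq_sub, Real.zero_rpow (sub_ne_zero.2 hz1.ne'), sub_zero]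

lemma HasDistortionOn.sq_mul_setIntegral_le {f : ℝ → ℝ} {r d : ℝ}
    (h : HasDistortionOn r 0 f (Ioo 0 1)) (hf : IntegrableOn f (Ioo 0 1)) (hd : d ∈ Ioo (0 : ℝ) 1)
    {x : ℝ} (hx : x ∈ Ioo (0 : ℝ) 1) : d ^ 2 * ∫ y in Ioo d 1, f y ≤ f x := by
  have hfd := h.nonneg d hd
  have h_int : ∫ y in Ioo d 1, f y ≤ f d := calc
    ∫ y in Ioo d 1, f y ≤ ∫ _ in Ioo d 1, f d :=
      setIntegral_mono_on (hf.mono_set (Ioo_subset_Ioo_left hd.1.le))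
        (integrableOn_const (by simp)) measurableSet_Ioo
        fun y hy ↦ h.antitoneOn hd ⟨hd.1.trans hy.1, hy.2⟩ hy.1.le
    _ = (1 - d) * f d := by simp [Real.volume_real_Ioo_of_le hd.2.le]
    _ ≤ f d := mul_le_of_le_one_left hfd (by linarith [hd.1])
  refine (mul_le_mul_of_nonneg_left h_int (sq_nonneg d)).trans ?_
  rcases le_total x d with hxd | hdx
  · exact (mul_le_of_le_one_left hfd (pow_le_one₀ hd.1.le hd.2.le)).trans (h.antitoneOn hx hd hxd)
  · exact (h.monotoneOn_sq_mul hd hx hdx).trans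
      (mul_le_of_le_one_left (h.nonneg x hx) (pow_le_one₀ hx.1.le hx.2.le))

section Density

variable {z : ℝ} (hz : 0 < z)

/-- The density of the image of Lebesgue measure on `(0, 1)` under the `n`-th iterate of
`lsv z`. -/
noncomputable def density (n : ℕ) : ℝ → ℝ := (transfer hz ^ n) 1

lemma density_zero : density hz 0 = 1 := rfl

lemma density_succ (n : ℕ) : density hz (n + 1) = transfer hz (density hz n) :=
  transfer_pow_succ_apply hz n 1

lemma transfer_pow_density (m n : ℕ) :
    (transfer hz ^ m) (density hz n) = density hz (m + n) := by
  rw [density, density, pow_add, Module.End.mul_apply]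

lemma integrableOn_one_Ioo : IntegrableOn (1 : ℝ → ℝ) (Ioo 0 1) := integrableOn_const (by simp)

lemma integrableOn_density (n : ℕ) : IntegrableOn (density hz n) (Ioo 0 1) :=
  integrableOn_transfer_pow hz n integrableOn_one_Ioo

lemma setIntegral_density (n : ℕ) : ∫ x in Ioo 0 1, density hz n x = 1 := by
  rw [density, setIntegral_transfer_pow hz n integrableOn_one_Ioo]
  simp

lemma density_nonneg (n : ℕ) : ∀ x ∈ Ioo (0 : ℝ) 1, 0 ≤ density hz n x :=
  transfer_pow_nonneg hz n fun _ _ ↦ zero_le_one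

lemma hasDistortionOn_density {r : ℝ} (hz1 : z ≤ 1) (hr : 0 ≤ r) (n : ℕ) :
    HasDistortionOn r 0 (density hz n) (Ioo 0 1) := by
  induction n with
  | zero =>
    refine .of_antitoneOn (fun _ _ ↦ zero_le_one) antitoneOn_const fun a ha b _ hab ↦ ?_
    simpa [density_zero] using pow_le_pow_left₀ ha.1.le hab 2
  | succ n ih =>
    have h := HasDistortionOn.transfer hz hz1 hr le_rfl
      (by simpa using ih.mono_set (Ioo_subset_Ioo_right (by norm_num)))
      (ih.mono_set (Ioo_subset_Ioo_left (by norm_num)))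
    rwa [zero_mul, ← density_succ] at h

lemma density_le_two (hz1 : z ≤ 1) (n : ℕ) {x : ℝ} (hx : x ∈ Ico (1 / 2 : ℝ) 1) :
    density hz n x ≤ 2 := by
  have hx' : x ∈ Ioo (0 : ℝ) 1 := ⟨one_half_pos.trans_le hx.1, hx.2⟩
  have hmass : x * density hz n x ≤ 1 := calc
    x * density hz n x ≤ ∫ y in Ioo 0 x, density hz n y :=
      mul_le_setIntegral_of_antitoneOn (integrableOn_density hz n)
        (hasDistortionOn_density hz hz1 zero_le_one n).antitoneOn hx'
    _ ≤ ∫ y in Ioo 0 1, density hz n y :=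
      setIntegral_mono_set (integrableOn_density hz n)
        ((ae_restrict_iff' measurableSet_Ioo).2 (ae_of_all _ (density_nonneg hz n)))
        (Ioo_subset_Ioo_right hx.2.le).eventuallyLE
    _ = 1 := setIntegral_density hz n
  nlinarith [density_nonneg hz n x hx', hx.1]

lemma six_mul_rpow_neg_div_deriv_add_one_le (hz1 : z ≤ 1) {y : ℝ}
    (hy : y ∈ Ioc (0 : ℝ) (1 / 2)) :
    6 * y ^ (-z) / deriv (leftBranch hz) y + 1 ≤ 6 * leftBranch hz y ^ (-z) := by
  have hy0 := hy.1
  have hg0 : 0 < leftBranch hz y := by rw [leftBranch_apply hz hy0.le]; positivity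
  have hw : 0 < (2 * y) ^ z := by positivity
  have hw1 := two_mul_rpow_le_one hz hy
  have hyw := rpow_le_two_mul_rpow hz hy.1.le
  have hle := leftBranch_rpow_le hz hz1 hy.1
  have hb : 0 < y ^ z := by positivity
  have : 0 < leftBranch hz y ^ z := by positivity
  rw [deriv_leftBranch hz hy.1, Real.rpow_neg hy0.le, Real.rpow_neg hg0.le]
  generalize (2 * y) ^ z = w at *
  generalize y ^ z = b at *
  have hprod : (1 + z * w) * (1 + (1 + z) * w) ≤ 2 * 3 := by
    gcongr <;> nlinarith
  calc 6 * b⁻¹ / (1 + (1 + z) * w) + 1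
      ≤ 6 * b⁻¹ / (1 + (1 + z) * w) + 6 * w / (b * ((1 + z * w) * (1 + (1 + z) * w))) := by
        gcongr
        rw [one_le_div (by positivity)]
        nlinarith
    _ = 6 * (b * (1 + z * w))⁻¹ := by field_simp; ring
    _ ≤ 6 * (leftBranch hz y ^ z)⁻¹ := by gcongr

lemma density_le (hz1 : z ≤ 1) (n : ℕ) :
    ∀ x ∈ Ioo (0 : ℝ) 1, density hz n x ≤ 6 * x ^ (-z) := by
  induction n with
  | zero =>
    intro x hx
    have := Real.one_le_rpow_of_pos_of_le_one_of_nonpos hx.1 hx.2.le (neg_nonpos.2 hz.le)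
    rw [density_zero, Pi.one_apply]
    linarith
  | succ n ih =>
    intro x hx
    have hright : branchTransfer rightBranch (density hz n) x ≤ 1 := by
      rw [branchTransfer_apply, deriv_rightBranch, rightBranch_symm_apply, div_le_one two_pos]
      exact density_le_two hz hz1 n ⟨by linarith [hx.1], by linarith [hx.2]⟩
    rw [← leftBranch_image_Ioo hz] at hx
    obtain ⟨y, hy, rfl⟩ := hx
    rw [density_succ, transfer_apply, Pi.add_apply, branchTransfer_apply_apply]
    refine le_trans ?_ (six_mul_rpow_neg_div_deriv_add_one_le hz hz1 ⟨hy.1, hy.2.le⟩)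
    gcongr
    · exact (deriv_leftBranch_pos hz hy.1).le
    · exact ih y ⟨hy.1, hy.2.trans (by norm_num)⟩

lemma exists_pos_le_density (hz1 : z < 1) :
    ∃ u > 0, u ≤ 1 ∧ ∀ n, ∀ x ∈ Ioo (0 : ℝ) 1, u ≤ density hz n x := by
  have hz1' : 0 < 1 - z := sub_pos.2 hz1
  set d : ℝ := ((1 - z) / 12) ^ (1 / (1 - z)) with hd_def
  have hd : d ∈ Ioo (0 : ℝ) 1 :=
    ⟨by positivity, Real.rpow_lt_one (by positivity) (by linarith) (by positivity)⟩
  have hd_pow : d ^ (1 - z) = (1 - z) / 12 := by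
    rw [hd_def, ← Real.rpow_mul (by positivity), one_div_mul_cancel hz1'.ne', Real.rpow_one]
  refine ⟨d ^ 2 * (1 / 2), by have := hd.1; positivity, by nlinarith [hd.1, hd.2], fun n x hx ↦ ?_⟩
  have h_int := integrableOn_density hz n
  have hnear : ∫ x in Ioo 0 d, density hz n x ≤ 1 / 2 := by
    refine (setIntegral_Ioo_le_of_le_rpow hz1 hd.1.le
      (h_int.mono_set (Ioo_subset_Ioo_right hd.2.le))
      fun y hy ↦ density_le hz hz1.le n y ⟨hy.1, hy.2.trans hd.2⟩).trans_eq ?_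
    rw [hd_pow]
    field_simp
    norm_num
  have hsplit := setIntegral_Ioo_eq_add h_int hd.1.le hd.2.le
  rw [setIntegral_density] at hsplit
  calc d ^ 2 * (1 / 2) ≤ d ^ 2 * ∫ y in Ioo d 1, density hz n y := by gcongr; linarith
    _ ≤ density hz n x :=
      (hasDistortionOn_density hz hz1.le zero_le_one n).sq_mul_setIntegral_le h_int hd hx

end Density

/-! ### Matching densities -/

/-- The class of densities on `(0, 1)` in which mass is matched. The distortion is controlled
separately on the two halves of the interval, because the mass removed on the right half leaves a
jump at `1 / 2`. The constant on the left half is the one that `transfer` reproduces, and the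
slack between the two constants pays for the subtraction on the right half. -/
structure Admissible (r R : ℝ) (f : ℝ → ℝ) : Prop where
  integrableOn : IntegrableOn f (Ioo 0 1)
  left : HasDistortionOn r (R * (1 / 2) ^ r) f (Ioo 0 (1 / 2))
  right : HasDistortionOn r R f (Ico (1 / 2) 1)

section Matching

variable {z r R E s M u : ℝ} {f g ψ : ℝ → ℝ}

lemma mul_one_half_rpow_le (hr : 0 ≤ r) (hR : 0 ≤ R) : R * (1 / 2) ^ r ≤ R :=
  mul_le_of_le_one_right hR (Real.rpow_le_one (by norm_num) (by norm_num) hr)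

namespace Admissible

lemma of_hasDistortionOn (hr : 0 ≤ r) (hR : 0 ≤ R) (hf : IntegrableOn f (Ioo 0 1))
    (h : HasDistortionOn r (R * (1 / 2) ^ r) f (Ioo 0 1)) : Admissible r R f where
  integrableOn := hf
  left := h.mono_set (Ioo_subset_Ioo_right (by norm_num))
  right := (h.mono_set (Ico_subset_Ioo_left one_half_pos)).mono_const
    (fun _ hx ↦ one_half_pos.trans_le hx.1) (mul_one_half_rpow_le hr hR)

lemma nonneg (h : Admissible r R f) : ∀ x ∈ Ioo (0 : ℝ) 1, 0 ≤ f x := fun x hx ↦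
  (lt_or_ge x (1 / 2)).elim (fun hx' ↦ h.left.nonneg x ⟨hx.1, hx'⟩)
    fun hx' ↦ h.right.nonneg x ⟨hx', hx.2⟩

lemma setIntegral_nonneg (h : Admissible r R f) : 0 ≤ ∫ x in Ioo 0 1, f x :=
  MeasureTheory.setIntegral_nonneg measurableSet_Ioo h.nonneg

lemma hasDistortionOn_transfer (hz : 0 < z) (hz1 : z ≤ 1) (hr : 0 ≤ r) (hR : 0 ≤ R)
    (h : Admissible r R f) : HasDistortionOn r (R * (1 / 2) ^ r) (transfer hz f) (Ioo 0 1) :=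
  h.left.transfer hz hz1 hr hR (h.right.mono_set Ioo_subset_Ico_self)

lemma transfer_pow (hz : 0 < z) (hz1 : z ≤ 1) (hr : 0 ≤ r) (hR : 0 ≤ R) (h : Admissible r R f)
    (n : ℕ) : Admissible r R ((transfer hz ^ n) f) := by
  induction n with
  | zero => exact h
  | succ n ih =>
    refine of_hasDistortionOn hr hR (integrableOn_transfer_pow hz _ h.integrableOn) ?_
    rw [transfer_pow_succ_apply]
    exact ih.hasDistortionOn_transfer hz hz1 hr hR

lemma branchTransfer_leftBranch (hz : 0 < z) (hz1 : z ≤ 1) (hr : 0 ≤ r) (hR : 0 ≤ R)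
    (h : Admissible r R f) : Admissible r R (branchTransfer (leftBranch hz) f) :=
  of_hasDistortionOn hr hR (integrableOn_branchTransfer_leftBranch hz h.integrableOn)
    (h.left.branchTransfer_leftBranch hz hz1 hr (by positivity))

lemma setIntegral_right_le (hr : 0 ≤ r) (hR : 0 ≤ R) (h : Admissible r R f) {x : ℝ}
    (hx : x ∈ Ico (1 / 2 : ℝ) 1) : ∫ y in Ioo (1 / 2) 1, f y ≤ 2 * Real.exp R * f x :=
  h.right.setIntegral_le hr hR (h.integrableOn.mono_set (Ioo_subset_Ioo_left (by norm_num))) hx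

lemma mul_setIntegral_right_le (hz : 0 < z) (hr : 0 ≤ r) (hR : 0 ≤ R) (h : Admissible r R f)
    (n : ℕ) (hu : ∀ x ∈ Ioo (0 : ℝ) 1, u ≤ density hz n x) {x : ℝ} (hx : x ∈ Ioo (0 : ℝ) 1) :
    u * ∫ y in Ioo (1 / 2) 1, f y ≤
      4 * Real.exp R * (transfer hz ^ n) (branchTransfer rightBranch f) x := by
  set m := ∫ y in Ioo (1 / 2) 1, f y
  have hm : 0 ≤ m := MeasureTheory.setIntegral_nonneg measurableSet_Ioo fun y hy ↦
    h.right.nonneg y (Ioo_subset_Ico_self hy)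
  have hle : ∀ t ∈ Ioo (0 : ℝ) 1,
      (m • (1 : ℝ → ℝ)) t ≤ ((4 * Real.exp R) • branchTransfer rightBranch f) t := fun t ht ↦ by
    have hy := h.setIntegral_right_le hr hR (x := rightBranch.symm t)
      (by rw [rightBranch_symm_apply]; constructor <;> linarith [ht.1, ht.2])
    simp only [Pi.smul_apply, Pi.one_apply, smul_eq_mul, mul_one, branchTransfer_apply,
      deriv_rightBranch]
    linarith
  have hpow := transfer_pow_mono hz n hle x hx
  rw [map_smul, map_smul] at hpow
  calc u * m ≤ m * density hz n x := by
        rw [mul_comm]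
        exact mul_le_mul_of_nonneg_left (hu x hx) hm
    _ ≤ _ := hpow

lemma mul_setIntegral_le_transfer_pow (hz : 0 < z) (hz1 : z ≤ 1) (hr : 0 ≤ r) (hR : 0 ≤ R)
    (hu1 : u ≤ 1) (hu : ∀ n, ∀ x ∈ Ioo (0 : ℝ) 1, u ≤ density hz n x) (n : ℕ)
    (h : Admissible r R f) {x : ℝ} (hx : x ∈ Ico (1 / 2 : ℝ) 1) :
    u * ∫ y in Ioo (leftPreimage hz (n + 1)) 1, f y ≤ 4 * Real.exp R * (transfer hz ^ n) f x := by
  have hx' : x ∈ Ioo (0 : ℝ) 1 := ⟨one_half_pos.trans_le hx.1, hx.2⟩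
  induction n generalizing f with
  | zero =>
    have hX : leftPreimage hz 1 = 1 / 2 := by
      rw [← (leftBranch hz).injective.eq_iff, leftBranch_leftPreimage_succ, leftPreimage_zero,
        leftBranch_one_half]
    have hm : 0 ≤ ∫ y in Ioo (1 / 2) 1, f y :=
      MeasureTheory.setIntegral_nonneg measurableSet_Ioo fun y hy ↦
        h.right.nonneg y (Ioo_subset_Ico_self hy)
    rw [zero_add, hX, pow_zero, Module.End.one_apply]
    nlinarith [h.setIntegral_right_le hr hR hx, mul_le_of_le_one_left hm hu1]
  | succ n ih =>
    have hX := leftPreimage_succ_mem_Ioc hz (n + 1)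
    have hleft := ih (h.branchTransfer_leftBranch hz hz1 hr hR)
    have himage : leftBranch hz '' Ioo (leftPreimage hz (n + 2)) (1 / 2) =
        Ioo (leftPreimage hz (n + 1)) 1 := by
      rw [OrderIso.image_Ioo, leftBranch_leftPreimage_succ, leftBranch_one_half]
    have hmass := setIntegral_branchTransfer_mul (f := f) (ψ := 1) measurableSet_Ioo
      fun y (hy : y ∈ Ioo (leftPreimage hz (n + 2)) (1 / 2)) ↦
        deriv_leftBranch_pos hz (hX.1.trans hy.1)
    simp only [himage, Pi.one_apply, mul_one] at hmass
    rw [setIntegral_Ioo_eq_add (h.integrableOn.mono_set (Ioo_subset_Ioo_left hX.1.le)) hX.2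
      (by norm_num), ← hmass, pow_succ, Module.End.mul_apply, transfer_apply, map_add,
      Pi.add_apply, mul_add, mul_add]
    exact add_le_add hleft (h.mul_setIntegral_right_le hz hr hR n (hu n) hx')

end Admissible

lemma integrableOn_indicator_Ico (c : ℝ) :
    IntegrableOn ((Ico (1 / 2 : ℝ) 1).indicator fun _ ↦ c) (Ioo 0 1) :=
  (integrableOn_const (by simp)).indicator measurableSet_Ico

lemma setIntegral_indicator_Ico (c : ℝ) :
    ∫ x in Ioo (0 : ℝ) 1, (Ico (1 / 2 : ℝ) 1).indicator (fun _ ↦ c) x = c / 2 := by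
  rw [setIntegral_indicator measurableSet_Ico,
    inter_eq_right.2 (Ico_subset_Ioo_left one_half_pos), setIntegral_const,
    Real.volume_real_Ico_of_le (by norm_num), smul_eq_mul]
  ring

lemma HasDistortionOn.admissible_sub_indicator {c : ℝ} (hr : 0 < r) (hr1 : r ≤ 1) (hR : 0 < R)
    (hc : 0 ≤ c) (h_int : IntegrableOn f (Ioo 0 1))
    (h : HasDistortionOn r (R * (1 / 2) ^ r) f (Ioo 0 1))
    (hf : ∀ x ∈ Ico (1 / 2 : ℝ) 1,
      (R + 2) * Real.exp R * c ≤ (R - R * (1 / 2) ^ r) * f x) :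
    Admissible r R (f - (Ico (1 / 2) 1).indicator fun _ ↦ c) where
  integrableOn := h_int.sub (integrableOn_indicator_Ico c)
  left := (h.mono_set (Ioo_subset_Ioo_right (by norm_num))).congr fun x hx ↦ by
    rw [Pi.sub_apply, indicator_of_notMem fun hx' ↦ hx.2.not_ge hx'.1, sub_zero]
  right := by
    have hlt : R * (1 / 2) ^ r < R :=
      mul_lt_of_lt_one_right hR (Real.rpow_lt_one (by norm_num) (by norm_num) hr)
    refine (HasDistortionOn.sub_const hr.le hr1 (by positivity) hlt hc
      (h.mono_set (Ico_subset_Ioo_left one_half_pos)) hf).congr fun x hx ↦ ?_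
    rw [Pi.sub_apply, indicator_of_mem hx]

/-- The admissible densities of mass `s` that are dominated by `E` times the image of Lebesgue
measure under some iterate of `lsv z`. The domination controls the mass near the neutral fixed
point, and the iterate is not recorded since all these images satisfy the same bounds. -/
structure Matchable (hz : 0 < z) (r R E s : ℝ) (f : ℝ → ℝ) : Prop extends Admissible r R f where
  setIntegral_eq : ∫ x in Ioo 0 1, f x = s
  exists_le_density : ∃ m, ∀ x ∈ Ioo (0 : ℝ) 1, f x ≤ E * density hz m x

namespace Matchable

variable {hz : 0 < z}

lemma mass_nonneg (h : Matchable hz r R E s f) : 0 ≤ s :=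
  h.setIntegral_eq ▸ h.setIntegral_nonneg

lemma mass_le (h : Matchable hz r R E s f) : s ≤ E := by
  obtain ⟨m, hm⟩ := h.exists_le_density
  calc s = ∫ x in Ioo 0 1, f x := h.setIntegral_eq.symm
    _ ≤ ∫ x in Ioo 0 1, E * density hz m x :=
      setIntegral_mono_on h.integrableOn ((integrableOn_density hz m).const_mul E)
        measurableSet_Ioo hm
    _ = E := by rw [integral_const_mul, setIntegral_density, mul_one]

lemma half_le_setIntegral (hz1 : z < 1) (h : Matchable hz r R E s f) {a : ℝ}
    (ha : a ∈ Icc (0 : ℝ) 1) (hs : 6 * E / (1 - z) * a ^ (1 - z) ≤ s / 2) :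
    s / 2 ≤ ∫ x in Ioo a 1, f x := by
  obtain ⟨m, hm⟩ := h.exists_le_density
  have hE : 0 ≤ E := h.mass_nonneg.trans h.mass_le
  have hnear : ∫ x in Ioo 0 a, f x ≤ 6 * E * (a ^ (1 - z) / (1 - z)) :=
    setIntegral_Ioo_le_of_le_rpow hz1 ha.1 (h.integrableOn.mono_set (Ioo_subset_Ioo_right ha.2))
      fun x hx ↦ by
        have hx' : x ∈ Ioo (0 : ℝ) 1 := ⟨hx.1, hx.2.trans_le ha.2⟩
        linarith [hm x hx', mul_le_mul_of_nonneg_left (density_le hz hz1.le m x hx') hE]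
  have hsplit := setIntegral_Ioo_eq_add h.integrableOn ha.1 ha.2
  rw [h.setIntegral_eq] at hsplit
  rw [div_mul_eq_mul_div, mul_div_assoc] at hs
  linarith

lemma transfer_pow_sub_indicator {c : ℝ} {n : ℕ} (hz1 : z ≤ 1) (hr : 0 < r) (hr1 : r ≤ 1)
    (hR : 0 < R) (hc : 0 ≤ c) (hn : 1 ≤ n) (h : Matchable hz r R E s f)
    (hf : ∀ x ∈ Ico (1 / 2 : ℝ) 1,
      (R + 2) * Real.exp R * c ≤ (R - R * (1 / 2) ^ r) * (transfer hz ^ n) f x) :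
    Matchable hz r R E (s - c / 2)
      ((transfer hz ^ n) f - (Ico (1 / 2) 1).indicator fun _ ↦ c) := by
  have h_int := integrableOn_transfer_pow hz n h.integrableOn
  obtain ⟨k, rfl⟩ := Nat.exists_eq_add_of_le' hn
  refine ⟨HasDistortionOn.admissible_sub_indicator hr hr1 hR hc h_int ?_ hf, ?_, ?_⟩
  · rw [transfer_pow_succ_apply]
    exact (h.transfer_pow hz hz1 hr.le hR.le k).hasDistortionOn_transfer hz hz1 hr.le hR.le
  · simp only [Pi.sub_apply]
    rw [integral_sub h_int (integrableOn_indicator_Ico c), setIntegral_transfer_pow hz _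
      h.integrableOn, h.setIntegral_eq, setIntegral_indicator_Ico]
  · obtain ⟨m, hm⟩ := h.exists_le_density
    refine ⟨k + 1 + m, fun x hx ↦ ?_⟩
    have hpow := transfer_pow_mono hz (k + 1) (g := E • density hz m) hm x hx
    rw [map_smul, transfer_pow_density] at hpow
    exact (sub_le_self _ (indicator_nonneg (fun _ _ ↦ hc) x)).trans hpow

lemma exists_transfer_pow_sub_indicator (hz : 0 < z) (hz1 : z < 1) (hr : 0 < r) (hr1 : r ≤ 1)
    (hR : 0 < R) :
    ∃ κ ∈ Ioc (0 : ℝ) 1, ∀ {E s f n}, Matchable hz r R E s f → 1 ≤ n →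
      6 * E / (1 - z) * leftPreimage hz (n + 1) ^ (1 - z) ≤ s / 2 →
      Matchable hz r R E ((1 - κ / 2) * s)
        ((transfer hz ^ n) f - (Ico (1 / 2) 1).indicator fun _ ↦ κ * s) := by
  obtain ⟨u, hu, hu1, hdens⟩ := exists_pos_le_density hz hz1
  set q := R - R * (1 / 2) ^ r
  have hq : 0 < q := sub_pos.2 <|
    mul_lt_of_lt_one_right hR (Real.rpow_lt_one (by norm_num) (by norm_num) hr)
  have hqR : q ≤ R := sub_le_self _ (by positivity)
  have hexp : 1 ≤ Real.exp R := Real.one_le_exp hR.le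
  set κ := q * u / (8 * Real.exp R * ((R + 2) * Real.exp R)) with hκ_def
  have hκ : κ ∈ Ioc (0 : ℝ) 1 := by
    refine ⟨by positivity, (div_le_one (by positivity)).2 ?_⟩
    calc q * u ≤ R * 1 := by gcongr
      _ ≤ 8 * 1 * ((R + 2) * 1) := by linarith
      _ ≤ 8 * Real.exp R * ((R + 2) * Real.exp R) := by gcongr
  refine ⟨κ, hκ, fun {E s f n} h hn hs ↦ ?_⟩
  rw [show (1 - κ / 2) * s = s - κ * s / 2 by ring]
  refine h.transfer_pow_sub_indicator hz1.le hr hr1 hR (mul_nonneg hκ.1.le h.mass_nonneg) hn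
    fun x hx ↦ ?_
  have hX := leftPreimage_mem_Ioc hz (n + 1)
  have hlow : u * (s / 2) ≤ 4 * Real.exp R * (transfer hz ^ n) f x :=
    (mul_le_mul_of_nonneg_left (h.half_le_setIntegral hz1 ⟨hX.1.le, hX.2⟩ hs) hu.le).trans
      (h.mul_setIntegral_le_transfer_pow hz hz1.le hr.le hR.le hu1 hdens n hx)
  calc (R + 2) * Real.exp R * (κ * s) = q * (u * (s / 2) / (4 * Real.exp R)) := by
        rw [hκ_def]; field_simp; ring
    _ ≤ q * (transfer hz ^ n) f x := by
        gcongr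
        rwa [div_le_iff₀' (by positivity)]

end Matchable

lemma exists_matching (hz : 0 < z) (hz1 : z < 1) (hr : 0 < r) (hr1 : r ≤ 1) (hR : 0 < R) :
    ∃ θ ∈ Ioo (0 : ℝ) 1, ∀ {E f g} {N : ℕ → ℕ},
      Matchable hz r R E 1 f → Matchable hz r R E 1 g → (∀ j, 1 ≤ N j) →
      (∀ j, 6 * E / (1 - z) * leftPreimage hz (N j + 1) ^ (1 - z) ≤ θ ^ j / 2) →
      ∀ j, ∃ F G, Matchable hz r R E (θ ^ j) F ∧ Matchable hz r R E (θ ^ j) G ∧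
        (transfer hz ^ ∑ i ∈ Finset.range j, N i) (f - g) = F - G := by
  obtain ⟨κ, hκ, hstep⟩ := Matchable.exists_transfer_pow_sub_indicator hz hz1 hr hr1 hR
  refine ⟨1 - κ / 2, ⟨by linarith [hκ.2], by linarith [hκ.1]⟩, fun {E f g N} hf hg hN hX j ↦ ?_⟩
  induction j with
  | zero => exact ⟨f, g, by simpa using hf, by simpa using hg, by simp⟩
  | succ j ih =>
    obtain ⟨F, G, hF, hG, hFG⟩ := ih
    refine ⟨_, _, by simpa only [pow_succ'] using hstep hF (hN j) (hX j),
      by simpa only [pow_succ'] using hstep hG (hN j) (hX j), ?_⟩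
    rw [Finset.sum_range_succ_comm, pow_add, Module.End.mul_apply, hFG, map_sub,
      sub_sub_sub_cancel_right]

lemma abs_setIntegral_mul_iterate_le (hz : 0 < z) {m n : ℕ} (hmn : m ≤ n)
    (hf : IntegrableOn f (Ioo 0 1)) (hψ : Measurable ψ) (hψM : ∀ x, |ψ x| ≤ M) :
    |∫ x in Ioo 0 1, f x * ψ ((lsv z)^[n] x)| ≤ M * ∫ x in Ioo 0 1, |(transfer hz ^ m) f x| := by
  obtain ⟨k, rfl⟩ := Nat.exists_eq_add_of_le' hmn
  simp only [Function.iterate_add_apply]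
  rw [← setIntegral_transfer_pow_mul hz m (ψ := fun x ↦ ψ ((lsv z)^[k] x)) hf
    (hψ.comp (measurable_lsv.iterate k)) fun x ↦ hψM _]
  exact abs_integral_mul_le (integrableOn_transfer_pow hz m hf) fun x ↦ hψM _

lemma Matchable.setIntegral_abs_sub_le {hz : 0 < z} (hf : Matchable hz r R E s f)
    (hg : Matchable hz r R E s g) : ∫ x in Ioo 0 1, |(f - g) x| ≤ 2 * s := by
  calc ∫ x in Ioo 0 1, |(f - g) x| ≤ ∫ x in Ioo 0 1, (f x + g x) := by
        refine setIntegral_mono_on (hf.integrableOn.sub hg.integrableOn).abs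
          (hf.integrableOn.add hg.integrableOn) measurableSet_Ioo fun x hx ↦ ?_
        have hfx := hf.nonneg x hx
        have hgx := hg.nonneg x hx
        rw [Pi.sub_apply, abs_sub_le_iff]
        constructor <;> linarith
    _ = 2 * s := by
        rw [integral_add hf.integrableOn hg.integrableOn, hf.setIntegral_eq, hg.setIntegral_eq]
        ring

end Matching

/-! ### Polynomial loss of memory -/

section Times

variable {θ γ Q H l : ℝ}

lemma exists_one_lt_pow_rpow_neg_eq (hθ : θ ∈ Ioo (0 : ℝ) 1) (hγ : 0 < γ) :
    ∃ l : ℝ, 1 < l ∧ ∀ j : ℕ, (l ^ j) ^ (-γ) = θ ^ j := by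
  refine ⟨θ ^ (-γ⁻¹), Real.one_lt_rpow_of_pos_of_lt_one_of_neg hθ.1 hθ.2 (by simpa), fun j ↦ ?_⟩
  rw [← Real.rpow_natCast, ← Real.rpow_mul hθ.1.le, ← Real.rpow_mul hθ.1.le, ← Real.rpow_natCast]
  congr 1
  field_simp

lemma sum_ceil_mul_pow_le (hH : 1 ≤ H) (hl : 1 < l) (j : ℕ) :
    ((∑ i ∈ Finset.range j, ⌈H * l ^ i⌉₊ : ℕ) : ℝ) ≤ 2 * H / (l - 1) * l ^ j := by
  have : 0 < l - 1 := sub_pos.2 hl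
  calc ((∑ i ∈ Finset.range j, ⌈H * l ^ i⌉₊ : ℕ) : ℝ)
      = ∑ i ∈ Finset.range j, (⌈H * l ^ i⌉₊ : ℝ) := Nat.cast_sum _ _
    _ ≤ ∑ i ∈ Finset.range j, 2 * H * l ^ i := by
        refine Finset.sum_le_sum fun i _ ↦ ?_
        have hone : 1 ≤ H * l ^ i := one_le_mul_of_one_le_of_one_le hH (one_le_pow₀ hl.le)
        linarith [Nat.ceil_lt_add_one (zero_le_one.trans hone)]
    _ = 2 * H / (l - 1) * (l ^ j - 1) := by
        rw [← Finset.mul_sum, geom_sum_eq hl.ne', mul_div_assoc', div_mul_eq_mul_div]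
    _ ≤ 2 * H / (l - 1) * l ^ j := by gcongr; linarith

lemma exists_le_and_pow_le_mul_rpow (hθ : 0 < θ) (hγ : 0 ≤ γ) (hQ : 0 < Q) (hl : 1 < l)
    (hlθ : ∀ j : ℕ, (l ^ j) ^ (-γ) = θ ^ j) {T : ℕ → ℕ} (hT0 : T 0 = 0)
    (hT : ∀ j, (T j : ℝ) ≤ Q * l ^ j) {n : ℕ} (hn : 1 ≤ n) :
    ∃ j, T j ≤ n ∧ θ ^ j ≤ Q ^ γ / θ * (n : ℝ) ^ (-γ) := by
  have hn0 : (0 : ℝ) < n := by exact_mod_cast hn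
  have hpow : ∀ j, (n : ℝ) ≤ Q * l ^ (j + 1) → θ ^ j ≤ Q ^ γ / θ * (n : ℝ) ^ (-γ) := by
    intro j hj
    calc θ ^ j = Q ^ γ / θ * (Q ^ (-γ) * θ ^ (j + 1)) := by
          rw [Real.rpow_neg hQ.le, pow_succ]; field_simp
      _ = Q ^ γ / θ * (Q * l ^ (j + 1)) ^ (-γ) := by
          rw [Real.mul_rpow hQ.le (by positivity), hlθ]
      _ ≤ Q ^ γ / θ * (n : ℝ) ^ (-γ) := by
          exact mul_le_mul_of_nonneg_left
            (Real.rpow_le_rpow_of_nonpos hn0 hj (neg_nonpos.2 hγ)) (by positivity)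
  rcases le_total (n : ℝ) Q with hnQ | hQn
  · refine ⟨0, hT0.trans_le n.zero_le, hpow 0 (hnQ.trans ?_)⟩
    exact le_mul_of_one_le_right hQ.le (one_le_pow₀ hl.le)
  · obtain ⟨j, hj, hj'⟩ := exists_nat_pow_near ((one_le_div hQ).2 hQn) hl
    rw [le_div_iff₀' hQ] at hj
    rw [div_lt_iff₀' hQ] at hj'
    exact ⟨j, by exact_mod_cast (hT j).trans hj, hpow j hj'.le⟩

lemma exists_matching_times {D : ℝ} (hθ : θ ∈ Ioo (0 : ℝ) 1) (hγ : 0 < γ) (hD : 0 ≤ D) :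
    ∃ (N : ℕ → ℕ) (C : ℝ), 0 ≤ C ∧ (∀ j, 1 ≤ N j) ∧
      (∀ j, D * (N j : ℝ) ^ (-γ) ≤ θ ^ j / 2) ∧
      ∀ n : ℕ, 1 ≤ n → ∃ j, ∑ i ∈ Finset.range j, N i ≤ n ∧ θ ^ j ≤ C * (n : ℝ) ^ (-γ) := by
  obtain ⟨l, hl, hlθ⟩ := exists_one_lt_pow_rpow_neg_eq hθ hγ
  have hθ0 := hθ.1
  have : 0 < l - 1 := sub_pos.2 hl
  set H := (2 * D + 1) ^ γ⁻¹ with hH_def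
  have hH : 1 ≤ H := Real.one_le_rpow (by linarith) (by positivity)
  have hH_pow : H ^ (-γ) = (2 * D + 1)⁻¹ := by
    rw [hH_def, Real.rpow_neg (by positivity), Real.rpow_inv_rpow (by positivity) hγ.ne']
  have hpos : ∀ j, 0 < H * l ^ j := fun j ↦ by positivity
  refine ⟨fun j ↦ ⌈H * l ^ j⌉₊, (2 * H / (l - 1)) ^ γ / θ, by positivity,
    fun j ↦ Nat.one_le_ceil_iff.2 (hpos j), fun j ↦ ?_, fun n hn ↦ ?_⟩
  · calc D * (⌈H * l ^ j⌉₊ : ℝ) ^ (-γ) ≤ D * (H * l ^ j) ^ (-γ) :=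
          mul_le_mul_of_nonneg_left (Real.rpow_le_rpow_of_nonpos (hpos j) (Nat.le_ceil _)
            (neg_nonpos.2 hγ.le)) hD
      _ = D / (2 * D + 1) * θ ^ j := by
          rw [Real.mul_rpow (by positivity) (by positivity), hH_pow, hlθ]
          ring
      _ ≤ 1 / 2 * θ ^ j := by
          gcongr ?_ * _
          rw [div_le_div_iff₀ (by positivity) two_pos]
          linarith
      _ = θ ^ j / 2 := by ring
  · exact exists_le_and_pow_le_mul_rpow hθ.1 hγ.le (by positivity) hl hlθ
      (T := fun j ↦ ∑ i ∈ Finset.range j, ⌈H * l ^ i⌉₊) rfl (sum_ceil_mul_pow_le hH hl) hn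

end Times

lemma leftPreimage_succ_rpow_le {z : ℝ} (hz : 0 < z) (hz1 : z ≤ 1) {n : ℕ} (hn : 1 ≤ n) :
    leftPreimage hz (n + 1) ^ (1 - z) ≤ (z / 2) ^ (-(1 / z - 1)) * (n : ℝ) ^ (-(1 / z - 1)) := by
  refine (leftPreimage_rpow_le hz hz1 n.succ_pos).trans ?_
  have hn0 : (0 : ℝ) < n := by exact_mod_cast hn
  gcongr ?_ * ?_
  refine Real.rpow_le_rpow_of_nonpos hn0 (by simp) ?_
  rw [neg_nonpos, sub_nonneg]
  exact one_le_one_div hz hz1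

theorem exists_memory_loss {z r R E : ℝ} (hz : 0 < z) (hz1 : z < 1) (hr : 0 < r) (hr1 : r ≤ 1)
    (hR : 0 < R) (hE : 0 ≤ E) :
    ∃ C, 0 ≤ C ∧ ∀ {f g ψ : ℝ → ℝ} {M : ℝ}, Matchable hz r R E 1 f → Matchable hz r R E 1 g →
      Measurable ψ → (∀ x, |ψ x| ≤ M) → ∀ n : ℕ, 1 ≤ n →
      |∫ x in Ioo 0 1, (f - g) x * ψ ((lsv z)^[n] x)| ≤ C * M * (n : ℝ) ^ (-(1 / z - 1)) := by
  obtain ⟨θ, hθ, hmatch⟩ := exists_matching hz hz1 hr hr1 hR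
  have : 0 < 1 - z := sub_pos.2 hz1
  obtain ⟨N, C, hC, hN, hNθ, htimes⟩ := exists_matching_times
    (D := 6 * E / (1 - z) * (z / 2) ^ (-(1 / z - 1))) hθ (sub_pos.2 (one_lt_one_div hz hz1))
    (by positivity)
  have hX : ∀ j, 6 * E / (1 - z) * leftPreimage hz (N j + 1) ^ (1 - z) ≤ θ ^ j / 2 := fun j ↦
    (mul_le_mul_of_nonneg_left (leftPreimage_succ_rpow_le hz hz1.le (hN j)) (by positivity)).trans
      (by rw [← mul_assoc]; exact hNθ j)
  refine ⟨2 * C, by positivity, fun {f g ψ M} hf hg hψ hψM n hn ↦ ?_⟩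
  have hM : 0 ≤ M := (abs_nonneg _).trans (hψM 0)
  obtain ⟨j, hjn, hj⟩ := htimes n hn
  obtain ⟨F, G, hF, hG, hFG⟩ := hmatch hf hg hN hX j
  calc |∫ x in Ioo 0 1, (f - g) x * ψ ((lsv z)^[n] x)|
      ≤ M * ∫ x in Ioo 0 1, |(F - G) x| := by
        rw [← hFG]
        exact abs_setIntegral_mul_iterate_le hz hjn (hf.integrableOn.sub hg.integrableOn) hψ hψM
    _ ≤ M * (2 * (C * (n : ℝ) ^ (-(1 / z - 1)))) := by
        gcongr
        exact (hF.setIntegral_abs_sub_le hG).trans (by gcongr)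
    _ = 2 * C * M * (n : ℝ) ^ (-(1 / z - 1)) := by ring

/-! ### Decay of correlations for the densities -/

section Covariance

variable {z b M R : ℝ} {C r : ℝ≥0} {φ ψ : ℝ → ℝ} {s : Set ℝ}

lemma sub_le_log_div {x y : ℝ} (hx : 0 < x) (hxy : x ≤ y) (hy : y ≤ 1) :
    y - x ≤ Real.log (y / x) := by
  have hy0 : 0 < y := hx.trans_le hxy
  calc y - x ≤ (y - x) / y := le_div_self (sub_nonneg.2 hxy) hy0 hy
    _ = 1 - (y / x)⁻¹ := by field_simp
    _ ≤ Real.log (y / x) := Real.one_sub_inv_le_log_of_pos (div_pos hy0 hx)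

lemma abs_sub_le_mul_log_rpow_of_holderOnWith (hφ : HolderOnWith C r φ s) (hs : s ⊆ Ioc 0 1)
    {x y : ℝ} (hx : x ∈ s) (hy : y ∈ s) (hxy : x ≤ y) :
    |φ y - φ x| ≤ C * Real.log (y / x) ^ (r : ℝ) := by
  calc |φ y - φ x| ≤ C * dist y x ^ (r : ℝ) := hφ.dist_le hy hx
    _ ≤ C * Real.log (y / x) ^ (r : ℝ) := by
      gcongr
      rw [Real.dist_eq, abs_of_nonneg (sub_nonneg.2 hxy)]
      exact sub_le_log_div (hs hx).1 hxy (hs hy).2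

lemma le_mul_distortion_of_abs_sub_le {u v x y K q : ℝ} (hu : 1 ≤ u) (hK : 0 ≤ K)
    (hlog : 0 ≤ Real.log (y / x)) (h : v - u ≤ K * Real.log (y / x) ^ q) :
    v ≤ u * distortion q K x y := by
  have : 0 ≤ K * Real.log (y / x) ^ q := by positivity
  calc v ≤ u * 1 + 1 * (K * Real.log (y / x) ^ q) := by linarith
    _ ≤ u * (K * Real.log (y / x) ^ q + 1) := by rw [mul_add, add_comm]; gcongr
    _ ≤ u * distortion q K x y := by
      unfold distortion
      gcongr
      exact Real.add_one_le_exp _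

lemma HasDistortionOn.mul_of_holderOnWith {f : ℝ → ℝ} (hf : HasDistortionOn r R f s)
    (hφ : HolderOnWith C r φ s) (hs : s ⊆ Ioc 0 1) (hφ1 : ∀ x ∈ s, 1 ≤ φ x) :
    HasDistortionOn r (R + C) (fun x ↦ φ x * f x) s := by
  refine hf.mul (fun x hx ↦ zero_le_one.trans (hφ1 x hx)) (fun x hx y hy hxy ↦ ?_)
    fun x hx y hy hxy ↦ ?_
  all_goals
    have habs := abs_sub_le_iff.1 (abs_sub_le_mul_log_rpow_of_holderOnWith hφ hs hx hy hxy)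
    have hlog := log_div_nonneg (hs hx).1 hxy
  · exact le_mul_distortion_of_abs_sub_le (hφ1 x hx) C.coe_nonneg hlog habs.1
  · exact le_mul_distortion_of_abs_sub_le (hφ1 y hy) C.coe_nonneg hlog habs.2

/-- The law of the `k`-th iterate of a uniformly distributed point of `(0, 1)`, with density
`density hz k`. These measures approximate the invariant one. -/
noncomputable def iterateLaw (z : ℝ) (k : ℕ) : Measure ℝ :=
  (volume.restrict (Ioo 0 1)).map (lsv z)^[k]

instance isProbabilityMeasure_restrict_Ioo :
    IsProbabilityMeasure (volume.restrict (Ioo (0 : ℝ) 1)) := ⟨by simp⟩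

instance isProbabilityMeasure_iterateLaw (k : ℕ) : IsProbabilityMeasure (iterateLaw z k) :=
  Measure.isProbabilityMeasure_map (measurable_lsv.iterate k).aemeasurable

lemma integral_iterateLaw_eq_comp (k : ℕ) (hψ : Measurable ψ) :
    ∫ x, ψ x ∂iterateLaw z k = ∫ x in Ioo 0 1, ψ ((lsv z)^[k] x) :=
  integral_map (measurable_lsv.iterate k).aemeasurable hψ.aestronglyMeasurable

lemma integral_iterateLaw (hz : 0 < z) (k : ℕ) (hψ : Measurable ψ) (hψM : ∀ x, |ψ x| ≤ M) :
    ∫ x, ψ x ∂iterateLaw z k = ∫ x in Ioo 0 1, density hz k x * ψ x := by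
  have h := setIntegral_transfer_pow_mul hz k (integrableOn_density hz 0) hψ hψM
  rw [transfer_pow_density, density_zero, add_zero] at h
  simp only [integral_iterateLaw_eq_comp k hψ, h, Pi.one_apply, one_mul]

lemma matchable_density {q E : ℝ} (hz : 0 < z) (hz1 : z ≤ 1) (hq : 0 ≤ q) (hR : 0 ≤ R)
    (hE : 1 ≤ E) (k : ℕ) : Matchable hz q R E 1 (density hz k) where
  toAdmissible := .of_hasDistortionOn hq hR (integrableOn_density hz k) <|
    (hasDistortionOn_density hz hz1 hq k).mono_const Ioo_subset_Ioi_self (by positivity)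
  setIntegral_eq := setIntegral_density hz k
  exists_le_density :=
    ⟨k, fun x hx ↦ le_mul_of_one_le_left (density_nonneg hz k x hx) hE⟩

lemma matchable_mul_density (hz : 0 < z) (hz1 : z ≤ 1) (hR : C ≤ R * (1 / 2) ^ (r : ℝ))
    (hR0 : 0 ≤ R) (hφm : Measurable φ) (hφ1 : ∀ x, 1 ≤ φ x) (hφb : ∀ x, φ x ≤ b)
    (hφ : HolderOnWith C r φ (Ioo 0 1)) (k : ℕ) :
    Matchable hz r R b 1 (fun x ↦ (∫ y, φ y ∂iterateLaw z k)⁻¹ * (φ x * density hz k x)) := by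
  have hφabs : ∀ x, |φ x| ≤ b := fun x ↦ by
    rw [abs_of_nonneg (zero_le_one.trans (hφ1 x))]; exact hφb x
  have hmass := integral_iterateLaw hz k hφm hφabs
  have hone : 1 ≤ ∫ y, φ y ∂iterateLaw z k :=
    one_le_integral_of_one_le (integrable_of_abs_le hφm hφabs) hφ1
  have h_int : IntegrableOn (fun x ↦ φ x * density hz k x) (Ioo 0 1) := by
    simp only [mul_comm (φ _)]
    exact integrable_mul_of_abs_le (integrableOn_density hz k) hφm hφabs
  have hdist := (hasDistortionOn_density hz hz1 r.coe_nonneg k).mul_of_holderOnWith hφ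
    Ioo_subset_Ioc_self fun x _ ↦ hφ1 x
  refine ⟨.of_hasDistortionOn r.coe_nonneg hR0 (h_int.const_mul _) ?_, ?_, k, fun x hx ↦ ?_⟩
  · exact (hdist.mono_const Ioo_subset_Ioi_self (by rwa [zero_add])).const_mul (by positivity)
  · rw [integral_const_mul, hmass]
    simp only [mul_comm (φ _)]
    exact inv_mul_cancel₀ (hmass ▸ (zero_lt_one.trans_le hone).ne')
  · have hh := density_nonneg hz k x hx
    exact (mul_le_of_le_one_left (mul_nonneg (zero_le_one.trans (hφ1 x)) hh)
      (inv_le_one_of_one_le₀ hone)).trans (mul_le_mul_of_nonneg_right (hφb x) hh)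

lemma integral_mul_sub_mul_integral_iterateLaw (hz : 0 < z) (k : ℕ) (hφm : Measurable φ)
    (hφb : ∀ x, |φ x| ≤ b) (hφ0 : ∫ x, φ x ∂iterateLaw z k ≠ 0) (hψ : Measurable ψ)
    (hψM : ∀ x, |ψ x| ≤ M) :
    ∫ x, φ x * ψ x ∂iterateLaw z k - (∫ x, φ x ∂iterateLaw z k) * ∫ x, ψ x ∂iterateLaw z k =
      (∫ x, φ x ∂iterateLaw z k) * ∫ x in Ioo 0 1,
        ((fun x ↦ (∫ y, φ y ∂iterateLaw z k)⁻¹ * (φ x * density hz k x)) - density hz k) x *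
          ψ x := by
  set m := ∫ x, φ x ∂iterateLaw z k
  have hφψm : Measurable fun x ↦ φ x * ψ x := hφm.mul hψ
  have hφψ : ∀ x, |φ x * ψ x| ≤ b * M := fun x ↦ by
    rw [← Real.norm_eq_abs]
    exact norm_mul_le_of_le (hφb x) (hψM x)
  have h_int := integrableOn_density hz k
  rw [integral_iterateLaw hz k hφψm hφψ, integral_iterateLaw hz k hψ hψM,
    ← integral_const_mul, ← integral_const_mul, ← integral_sub
    (integrable_mul_of_abs_le h_int hφψm hφψ) ((integrable_mul_of_abs_le h_int hψ hψM).const_mul m)]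
  refine integral_congr_ae (ae_of_all _ fun x ↦ ?_)
  simp only [Pi.sub_apply]
  field_simp

lemma exists_covariance_decay_of_one_le (hz : 0 < z) (hz1 : z < 1) (hr : 0 < r) (hr1 : r ≤ 1)
    (hφm : Measurable φ) (hφ1 : ∀ x, 1 ≤ φ x) (hφb : ∀ x, φ x ≤ b)
    (hφ : HolderOnWith C r φ (Ioo 0 1)) :
    ∃ K : ℝ, 0 ≤ K ∧ ∀ {ψ : ℝ → ℝ} {M : ℝ}, Measurable ψ → (∀ x, |ψ x| ≤ M) →
      ∀ k n : ℕ, 1 ≤ n →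
      |∫ x, φ x * ψ ((lsv z)^[n] x) ∂iterateLaw z k -
        (∫ x, φ x ∂iterateLaw z k) * ∫ x, ψ ((lsv z)^[n] x) ∂iterateLaw z k|
        ≤ K * M * (n : ℝ) ^ (-(1 / z - 1)) := by
  have hb : 1 ≤ b := (hφ1 0).trans (hφb 0)
  have hφabs : ∀ x, |φ x| ≤ b := fun x ↦ by
    rw [abs_of_nonneg (zero_le_one.trans (hφ1 x))]; exact hφb x
  have hR : (C : ℝ) ≤ (C + 1) * 2 ^ (r : ℝ) * (1 / 2) ^ (r : ℝ) := by
    rw [mul_assoc, ← Real.mul_rpow (by norm_num) (by norm_num)]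
    norm_num
  obtain ⟨K, hK, hdecay⟩ := exists_memory_loss hz hz1 (r := r) (R := (C + 1) * 2 ^ (r : ℝ))
    (NNReal.coe_pos.2 hr) (NNReal.coe_le_one.2 hr1) (by positivity) (zero_le_one.trans hb)
  refine ⟨b * K, by positivity, fun {ψ M} hψ hψM k n hn ↦ ?_⟩
  have hmass_ge : 1 ≤ ∫ x, φ x ∂iterateLaw z k :=
    one_le_integral_of_one_le (integrable_of_abs_le hφm hφabs) hφ1
  have hmass_le : ∫ x, φ x ∂iterateLaw z k ≤ b :=
    (le_abs_self _).trans (abs_integral_le_of_abs_le hφabs)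
  have hmatch := hdecay (matchable_mul_density hz hz1.le hR (by positivity) hφm hφ1 hφb hφ k)
    (matchable_density hz hz1.le r.coe_nonneg (by positivity) hb k) hψ hψM n hn
  rw [integral_mul_sub_mul_integral_iterateLaw hz k hφm hφabs
    (zero_lt_one.trans_le hmass_ge).ne' (ψ := fun x ↦ ψ ((lsv z)^[n] x))
    (hψ.comp (measurable_lsv.iterate n)) fun x ↦ hψM _, abs_mul,
    abs_of_nonneg (zero_le_one.trans hmass_ge)]
  calc _ ≤ b * (K * M * (n : ℝ) ^ (-(1 / z - 1))) :=
        mul_le_mul hmass_le hmatch (abs_nonneg _) (zero_le_one.trans hb)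
    _ = b * K * M * (n : ℝ) ^ (-(1 / z - 1)) := by ring

theorem exists_covariance_decay (hz : 0 < z) (hz1 : z < 1) (hr : 0 < r) (hr1 : r ≤ 1)
    (hφm : Measurable φ) (hφb : ∀ x, |φ x| ≤ b) (hφ : HolderOnWith C r φ (Ioo 0 1)) :
    ∃ K : ℝ, 0 ≤ K ∧ ∀ {ψ : ℝ → ℝ} {M : ℝ}, Measurable ψ → (∀ x, |ψ x| ≤ M) →
      ∀ k n : ℕ, 1 ≤ n →
      |∫ x, φ x * ψ ((lsv z)^[n] x) ∂iterateLaw z k -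
        (∫ x, φ x ∂iterateLaw z k) * ∫ x, ψ ((lsv z)^[n] x) ∂iterateLaw z k|
        ≤ K * M * (n : ℝ) ^ (-(1 / z - 1)) := by
  obtain ⟨K, hK, hdecay⟩ := exists_covariance_decay_of_one_le (φ := fun x ↦ φ x + (b + 1))
    (b := 2 * b + 1) (C := C) hz hz1 hr hr1 (hφm.add_const _)
    (fun x ↦ by linarith [(abs_le.1 (hφb x)).1]) (fun x ↦ by linarith [(abs_le.1 (hφb x)).2])
    fun x hx y hy ↦ by simpa only [edist_add_right] using hφ x hx y hy
  refine ⟨K, hK, fun {ψ M} hψ hψM k n hn ↦ ?_⟩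
  have hψn : Measurable fun x ↦ ψ ((lsv z)^[n] x) := hψ.comp (measurable_lsv.iterate n)
  have hφi : Integrable φ (iterateLaw z k) := integrable_of_abs_le hφm hφb
  rw [← integral_add_const_mul_sub_mul_integral hφi
    (integrable_of_abs_le hψn fun x ↦ hψM _)
    (integrable_mul_of_abs_le hφi hψn fun x ↦ hψM _) (b + 1)]
  exact hdecay hψ hψM k n hn

end Covariance

/-! ### Convergence to the invariant measure -/

section Invariant

variable {z b M : ℝ} {C r : ℝ≥0} {ρ φ ψ : ℝ → ℝ} {μ : Measure ℝ}

lemma exists_lipschitzWith_integral_abs_sub_le {ν : Measure ℝ} [IsFiniteMeasure ν]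
    (hρ : Integrable ρ ν) {ε : ℝ} (hε : 0 < ε) :
    ∃ (q : ℝ → ℝ) (L : ℝ≥0) (b : ℝ), LipschitzWith L q ∧ (∀ x, |q x| ≤ b) ∧
      ∫ x, |ρ x - q x| ∂ν ≤ ε := by
  obtain ⟨q, hq_compact, hq_smooth, hq_le⟩ :=
    (memLp_one_iff_integrable.2 hρ).exist_eLpNorm_sub_le (by simp) le_rfl hε
  obtain ⟨L, hL⟩ := hq_smooth.lipschitzWith_of_hasCompactSupport hq_compact (by simp)
  obtain ⟨b, hb⟩ := hq_compact.exists_bound_of_continuous hq_smooth.continuous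
  have h_int : Integrable (ρ - q) ν :=
    hρ.sub (integrable_of_abs_le hq_smooth.continuous.measurable hb)
  rw [eLpNorm_one_eq_lintegral_enorm, ← ofReal_integral_norm_eq_lintegral_enorm h_int,
    ENNReal.ofReal_le_ofReal_iff hε.le] at hq_le
  exact ⟨q, L, b, hL, hb, hq_le⟩

lemma tendsto_covariance_of_lipschitzWith {q : ℝ → ℝ} {L : ℝ≥0} (hz : 0 < z) (hz1 : z < 1)
    (hq : LipschitzWith L q) (hqb : ∀ x, |q x| ≤ b) (hψ : Measurable ψ) (hψM : ∀ x, |ψ x| ≤ M) :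
    Tendsto (fun n ↦ (∫ x in Ioo 0 1, q x * ψ ((lsv z)^[n] x)) -
      (∫ x in Ioo 0 1, q x) * ∫ x in Ioo 0 1, ψ ((lsv z)^[n] x)) atTop (𝓝 0) := by
  obtain ⟨K, -, hdecay⟩ := exists_covariance_decay (b := b) (φ := q) hz hz1 zero_lt_one le_rfl
    hq.continuous.measurable hqb (hq.holderWith.holderOnWith _)
  have hlim : Tendsto (fun n : ℕ ↦ K * M * (n : ℝ) ^ (-(1 / z - 1))) atTop (𝓝 0) := by
    simpa using ((tendsto_rpow_neg_atTop (sub_pos.2 (one_lt_one_div hz hz1))).comp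
      tendsto_natCast_atTop_atTop).const_mul (K * M)
  refine squeeze_zero_norm' ((eventually_ge_atTop 1).mono fun n hn ↦ ?_) hlim
  simpa [iterateLaw] using hdecay hψ hψM 0 n hn

lemma tendsto_covariance_of_integrableOn (hz : 0 < z) (hz1 : z < 1) (hρ : IntegrableOn ρ (Ioo 0 1))
    (hψ : Measurable ψ) (hψM : ∀ x, |ψ x| ≤ M) :
    Tendsto (fun n ↦ (∫ x in Ioo 0 1, ρ x * ψ ((lsv z)^[n] x)) -
      (∫ x in Ioo 0 1, ρ x) * ∫ x in Ioo 0 1, ψ ((lsv z)^[n] x)) atTop (𝓝 0) := by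
  have hM : 0 ≤ M := (abs_nonneg _).trans (hψM 0)
  refine Metric.tendsto_nhds.2 fun ε hε ↦ ?_
  obtain ⟨q, L, b, hq, hqb, hρq⟩ := exists_lipschitzWith_integral_abs_sub_le hρ
    (show 0 < ε / (4 * (M + 1)) by positivity)
  have hqi : IntegrableOn q (Ioo 0 1) := integrable_of_abs_le hq.continuous.measurable hqb
  have hsmall : 2 * M * (ε / (4 * (M + 1))) < ε / 2 := by
    rw [← sub_pos]
    have : ε / 2 - 2 * M * (ε / (4 * (M + 1))) = ε / (2 * (M + 1)) := by field_simp; ring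
    rw [this]
    positivity
  filter_upwards [Metric.tendsto_nhds.1 (tendsto_covariance_of_lipschitzWith hz hz1 hq hqb hψ hψM)
    (ε / 2) (half_pos hε)] with n hn
  rw [dist_zero_right, Real.norm_eq_abs] at hn ⊢
  have hψn : Measurable fun x ↦ ψ ((lsv z)^[n] x) := hψ.comp (measurable_lsv.iterate n)
  have hdiff := abs_integral_mul_sub_mul_integral_le (hρ.sub hqi)
    (ψ := fun x ↦ ψ ((lsv z)^[n] x)) fun x ↦ hψM _
  simp only [Pi.sub_apply, sub_mul] at hdiff
  rw [integral_sub hρ hqi, integral_sub (integrable_mul_of_abs_le hρ hψn fun x ↦ hψM _)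
    (integrable_mul_of_abs_le hqi hψn fun x ↦ hψM _)] at hdiff
  have hle := hdiff.trans (mul_le_mul_of_nonneg_left hρq (by positivity))
  rw [abs_lt] at hn ⊢
  rw [abs_le] at hle
  constructor <;> linarith

lemma absolutelyContinuous_restrict_Ioo (hμ : μ (Icc (0 : ℝ) 1)ᶜ = 0) (hac : μ ≪ volume) :
    μ ≪ volume.restrict (Ioo (0 : ℝ) 1) := by
  rw [← Measure.restrict_eq_self_of_ae_mem (show ∀ᵐ x ∂μ, x ∈ Icc (0 : ℝ) 1 from hμ),
    Measure.restrict_congr_set Ioo_ae_eq_Icc]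
  exact hac.restrict _

lemma tendsto_integral_iterateLaw [IsProbabilityMeasure μ] (hz : 0 < z) (hz1 : z < 1)
    (hac : μ ≪ volume.restrict (Ioo (0 : ℝ) 1)) (hinv : MeasurePreserving (lsv z) μ μ)
    (hψ : Measurable ψ) (hψM : ∀ x, |ψ x| ≤ M) :
    Tendsto (fun n ↦ ∫ x, ψ x ∂iterateLaw z n) atTop (𝓝 (∫ x, ψ x ∂μ)) := by
  have hiterate : ∀ n, ∫ x in Ioo 0 1,
      (μ.rnDeriv (volume.restrict (Ioo 0 1)) x).toReal * ψ ((lsv z)^[n] x) = ∫ x, ψ x ∂μ := by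
    intro n
    have hn := hinv.iterate n
    rw [integral_toReal_rnDeriv_mul hac, ← integral_map hn.aemeasurable
      hψ.aestronglyMeasurable, hn.map_eq]
  have hcov := tendsto_covariance_of_integrableOn hz hz1
    (Measure.integrable_toReal_rnDeriv (μ := μ) (ν := volume.restrict (Ioo 0 1))) hψ hψM
  simp only [hiterate, Measure.integral_toReal_rnDeriv hac, probReal_univ, one_mul,
    ← integral_iterateLaw_eq_comp _ hψ] at hcov
  simpa using hcov.const_sub (∫ x, ψ x ∂μ)

theorem exists_covariance_decay_of_measurePreserving [IsProbabilityMeasure μ] (hz : 0 < z)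
    (hz1 : z < 1) (hac : μ ≪ volume.restrict (Ioo (0 : ℝ) 1))
    (hinv : MeasurePreserving (lsv z) μ μ) (hr : 0 < r) (hr1 : r ≤ 1) (hφm : Measurable φ)
    (hφb : ∀ x, |φ x| ≤ b) (hφ : HolderOnWith C r φ (Ioo 0 1)) :
    ∃ K : ℝ, 0 ≤ K ∧ ∀ {ψ : ℝ → ℝ} {M : ℝ}, Measurable ψ → (∀ x, |ψ x| ≤ M) → ∀ n : ℕ, 1 ≤ n →
      |∫ x, φ x * ψ ((lsv z)^[n] x) ∂μ - (∫ x, φ x ∂μ) * ∫ x, ψ x ∂μ|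
        ≤ K * M * (n : ℝ) ^ (-(1 / z - 1)) := by
  obtain ⟨K, hK, hdecay⟩ := exists_covariance_decay hz hz1 hr hr1 hφm hφb hφ
  refine ⟨K, hK, fun {ψ M} hψ hψM n hn ↦ ?_⟩
  have hψn : Measurable fun x ↦ ψ ((lsv z)^[n] x) := hψ.comp (measurable_lsv.iterate n)
  have hlim {χ : ℝ → ℝ} {B : ℝ} (hχ : Measurable χ) (hχB : ∀ x, |χ x| ≤ B) :=
    tendsto_integral_iterateLaw hz hz1 hac hinv hχ hχB
  have hψn_eq : ∫ x, ψ ((lsv z)^[n] x) ∂μ = ∫ x, ψ x ∂μ := by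
    have h := hinv.iterate n
    rw [← integral_map h.aemeasurable hψ.aestronglyMeasurable, h.map_eq]
  rw [← hψn_eq]
  refine le_of_tendsto' ((hlim (hφm.mul hψn) (B := b * M) fun x ↦ ?_).sub
    ((hlim hφm hφb).mul (hlim hψn fun x ↦ hψM _))).abs fun k ↦ hdecay hψ hψM k n hn
  rw [Pi.mul_apply, ← Real.norm_eq_abs]
  exact norm_mul_le_of_le (hφb x) (hψM _)

lemma exists_continuous_bounded_eqOn_Icc {a c : ℝ} (hac : a ≤ c) (hφ : ContinuousOn φ (Icc a c)) :
    ∃ (g : ℝ → ℝ) (b : ℝ), Continuous g ∧ (∀ x, |g x| ≤ b) ∧ EqOn g φ (Icc a c) := by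
  obtain ⟨b, hb⟩ := isCompact_Icc.exists_bound_of_continuousOn hφ
  exact ⟨IccExtend hac ((Icc a c).domRestrict φ), b, hφ.domRestrict.Icc_extend',
    fun x ↦ hb _ (projIcc a c hac x).2, fun x hx ↦ IccExtend_of_mem hac _ hx⟩

end Invariant

end LSV

/-- For `z ∈ (0,1)` and `μ` the unique absolutely continuous `f_z`-invariant
Borel probability measure on `[0,1]`, correlations of a Hölder observable `φ` against a bounded
measurable `ψ` decay at rate `n^{−(1/z − 1)}`. -/
theorem lsv_polynomial_decay_of_correlations
    (z : ℝ) (hz : z ∈ Set.Ioo (0 : ℝ) 1)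
    (μ : Measure ℝ) (hμprob : IsProbabilityMeasure μ) (hμsupp : μ (Set.Icc (0 : ℝ) 1)ᶜ = 0)
    (hμac : μ ≪ volume) (hμinv : MeasurePreserving (lsv z) μ μ)
    (φ : ℝ → ℝ) (hφ : ∃ C r : ℝ≥0, 0 < r ∧ r ≤ 1 ∧ HolderOnWith C r φ (Set.Icc (0 : ℝ) 1))
    (ψ : ℝ → ℝ) (hψmeas : Measurable ψ) (hψbdd : ∃ M : ℝ, ∀ x, |ψ x| ≤ M) :
    ∃ C : ℝ, 0 < C ∧ ∀ n : ℕ, 1 ≤ n →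
      |∫ x, φ x * ψ ((lsv z)^[n] x) ∂μ - (∫ x, φ x ∂μ) * ∫ x, ψ x ∂μ|
        ≤ C * (n : ℝ) ^ (-(1 / z - 1)) := by
  obtain ⟨C, r, hr, hr1, hφ⟩ := hφ
  obtain ⟨M, hψM⟩ := hψbdd
  obtain ⟨g, b, hg, hgb, hgφ⟩ :=
    LSV.exists_continuous_bounded_eqOn_Icc zero_le_one (hφ.continuousOn hr)
  have hg_holder : HolderOnWith C r g (Ioo 0 1) := fun x hx y hy ↦ by
    have hsub := Ioo_subset_Icc_self (a := (0 : ℝ)) (b := 1)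
    simpa only [hgφ (hsub hx), hgφ (hsub hy)] using hφ x (hsub hx) y (hsub hy)
  obtain ⟨K, hK, hdecay⟩ := LSV.exists_covariance_decay_of_measurePreserving hz.1 hz.2
    (LSV.absolutelyContinuous_restrict_Ioo hμsupp hμac) hμinv hr hr1 hg.measurable hgb hg_holder
  have hM : 0 ≤ M := (abs_nonneg _).trans (hψM 0)
  have hae : g =ᵐ[μ] φ := by
    filter_upwards [show ∀ᵐ x ∂μ, x ∈ Icc (0 : ℝ) 1 from hμsupp] with x hx using hgφ hx
  refine ⟨K * M + 1, by positivity, fun n hn ↦ ?_⟩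
  have hn_decay := hdecay hψmeas hψM n hn
  rw [integral_congr_ae hae, integral_congr_ae (hae.fun_mul .rfl)] at hn_decay
  exact hn_decay.trans (by gcongr; linarith)
end
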